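/- Let X be a nonnegative, non-arithmetic random variable with E[X] = ∞ whose truncated mean ℓ(x) = ∫₀ˣ (1 - F(t)) dt is slowly varying at infinity. Then the renewal measure U satisfies lim_{x→∞} ℓ(x) U[x, x+h) = h for every h > 0. -/

import Mathlib

/-!
Fourier proof of the strong renewal theorem in the relatively stable case. Write `φ` for the
characteristic function of `X` and `U` for the renewal measure.

The truncated mean controls `φ` from both sides. Since `ℓ(a) = E[min(X, a)]` (`ell_eq`), one has
`|φ(t) - φ(s)| ≤ 2 d ℓ(1/d)` with `d = |t - s|` (`norm_charFun_sub`); and since `ℓ` is slowly varying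
and `X` is non-arithmetic, `|1 - φ(t)| ≥ c |t| ℓ(1/|t|)` on every bounded interval (`charFun_lower`).

Globally, `U[0, x] ~ x / ℓ(x)` (`tendsto_U`). This needs no transforms: one step of the walk raises
`E[min(S_n, x)]` by `E[ℓ((x - S_n)⁺)]` (`step_min`), and summing over `n` bounds `U[0, x]` from both
sides.

Locally, let `K` be a kernel whose Fourier transform `k` is Lipschitz with compact support. Then
`∫ K(y - x) dU(y)` is the limit, as `r ↑ 1`, of `∫ k(t) e^{-itx} / (1 - rφ(t)) dt` (`tendsto_J`).
Compare the values at `x` and `x + d` with `0 ≤ d ≤ εx`. Frequencies `|t| ≤ A/x` contribute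
`O(Aε / ℓ(x))`, because the phases differ by at most `d|t|`, which cancels the pole at the origin.
For the other frequencies, shifting by half a period and using the modulus of continuity of `φ`
together with Potter's bound gives `O(1 / (A ℓ(x)))` (`osc_half`, `osc_bound`, `main_diff`). With
`ε = A⁻²` the integral is therefore constant over windows of length `εx` up to an error small
compared with `1/ℓ(x)`, so it may be replaced by its average over such a window. That average is
nearly `U(x, x + εx] ∫ K / (εx)` (`avg_bound`), which is asymptotic to `∫ K / ℓ(x)` by the global
statement. Hence `ℓ(x) ∫ K(y - x) dU(y) → ∫ K` (`tendsto_I`).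

Taking for `K` a Fejér kernel times an arbitrary character shows that the measures `ℓ(x) U(x + ·)`
weighted by the Fejér kernel have convergent characteristic functions. Lévy's continuity theorem
gives their weak convergence (`tendsto_test`), hence vague convergence of `ℓ(x) U(x + ·)` to Lebesgue
measure (`tendsto_compact`), and trapezoids squeezing the indicator of `[0, h)` finish the proof
(`blackwell`).
-/

open MeasureTheory Filter Set Asymptotics Topology

/-- Tail of a distribution: `P[X > x]`. -/
noncomputable def tailF (μ : Measure ℝ) (x : ℝ) : ℝ := (μ (Set.Ioi x)).toReal

/-- Truncated mean `ℓ(x) = ∫₀ˣ (1 - F(t)) dt`. -/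
noncomputable def ell (μ : Measure ℝ) (x : ℝ) : ℝ := ∫ t in (0:ℝ)..x, tailF μ t

/-- A function is slowly varying at infinity. -/
def SlowlyVarying (f : ℝ → ℝ) : Prop :=
  (∀ᶠ x in atTop, 0 < f x) ∧
    ∀ c : ℝ, 1 < c → Tendsto (fun x => f (c * x) / f x) atTop (𝓝 1)

/-- `X` is arithmetic: `X/h ∈ ℤ` almost surely for some `h > 0`. -/
def IsArith (μ : Measure ℝ) : Prop :=
  ∃ h : ℝ, 0 < h ∧ μ {x : ℝ | ∃ n : ℤ, x = n * h} = 1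

/-- `n`-fold convolution power of `μ`: the law of `S_n`. -/
noncomputable def convPow (μ : Measure ℝ) : ℕ → Measure ℝ
  | 0 => Measure.dirac 0
  | n + 1 => Measure.map (fun p : ℝ × ℝ => p.1 + p.2) ((convPow μ n).prod μ)

/-- The renewal (Green) measure `U{I} = Σ_{n≥0} P[S_n ∈ I]`. -/
noncomputable def renewal (μ : Measure ℝ) (s : Set ℝ) : ENNReal :=
  ∑' n : ℕ, convPow μ n s

namespace Renew

/-! ### The truncated mean -/

variable {μ : Measure ℝ}

lemma ae_nonneg (hnn : μ (Set.Iio 0) = 0) : ∀ᵐ y ∂μ, 0 ≤ y := by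
  rw [ae_iff]; simpa [Set.Iio] using hnn

lemma integrable_min {ν : Measure ℝ} [IsFiniteMeasure ν] (hν : ∀ᵐ y ∂ν, 0 ≤ y) {a : ℝ}
    (ha : 0 ≤ a) : Integrable (fun y => min y a) ν := by
  refine (integrable_const a).mono' (by fun_prop) ?_
  filter_upwards [hν] with y hy
  rw [Real.norm_of_nonneg (le_min hy ha)]
  exact min_le_right _ _

lemma tendsto_ell_ratio (hsv : SlowlyVarying (ell μ)) {c : ℝ} (hc : 0 < c) :
    Tendsto (fun x => ell μ (c * x) / ell μ x) atTop (𝓝 1) := by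
  rcases lt_trichotomy c 1 with h | h | h
  · have h1 := (hsv.2 c⁻¹ ((one_lt_inv₀ hc).2 h)).comp
      (tendsto_id.const_mul_atTop hc : Tendsto (fun x => c * x) atTop atTop)
    have h2 := h1.inv₀ one_ne_zero
    simp only [inv_one] at h2
    refine h2.congr fun x => ?_
    simp only [Function.comp_apply, inv_div]
    rw [inv_mul_cancel_left₀ hc.ne']
  · subst h
    simp only [one_mul]
    refine tendsto_const_nhds.congr' ?_
    filter_upwards [hsv.1] with x hx
    rw [div_self hx.ne']
  · exact hsv.2 c h

variable [IsProbabilityMeasure μ]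

/-- Layer-cake formula: `ℓ(a) = E[min(X, a)]`. -/
lemma ell_eq (hnn : ∀ᵐ y ∂μ, 0 ≤ y) {a : ℝ} (ha : 0 ≤ a) :
    ell μ a = ∫ y, min y a ∂μ := by
  rw [Integrable.integral_eq_integral_meas_lt (integrable_min hnn ha)]
  · rw [ell, intervalIntegral.integral_of_le ha, ← integral_indicator measurableSet_Ioc,
      ← integral_indicator measurableSet_Ioi, integral_congr_ae]
    filter_upwards [Measure.ae_ne volume a] with t hta
    by_cases h0 : 0 < t
    · by_cases h1 : t < a
      · rw [indicator_of_mem (show t ∈ Ioc 0 a from ⟨h0, h1.le⟩),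
          indicator_of_mem (show t ∈ Ioi 0 from h0)]
        simp [tailF, Measure.real, h1, Set.Ioi]
      · have h2 : a < t := lt_of_le_of_ne (not_lt.1 h1) (Ne.symm hta)
        rw [indicator_of_notMem (show t ∉ Ioc 0 a from fun h => absurd h.2 (not_le.2 h2)),
          indicator_of_mem (show t ∈ Ioi 0 from h0)]
        simp [h1]
    · rw [indicator_of_notMem (show t ∉ Ioc 0 a from fun h => h0 h.1),
          indicator_of_notMem (show t ∉ Ioi 0 from h0)]
  · filter_upwards [hnn] with y hy using le_min hy ha

lemma ell_mono (hnn : ∀ᵐ y ∂μ, 0 ≤ y) {a b : ℝ} (ha : 0 ≤ a) (hab : a ≤ b) :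
    ell μ a ≤ ell μ b := by
  rw [ell_eq hnn ha, ell_eq hnn (ha.trans hab)]
  exact integral_mono (integrable_min hnn ha) (integrable_min hnn (ha.trans hab))
    fun y => min_le_min_left _ hab

lemma ell_nonneg (hnn : ∀ᵐ y ∂μ, 0 ≤ y) {a : ℝ} (ha : 0 ≤ a) : 0 ≤ ell μ a := by
  rw [ell_eq hnn ha]
  refine integral_nonneg_of_ae ?_
  filter_upwards [hnn] with y hy using le_min hy ha

lemma ell_le (hnn : ∀ᵐ y ∂μ, 0 ≤ y) {a : ℝ} (ha : 0 ≤ a) : ell μ a ≤ a := by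
  rw [ell_eq hnn ha]
  calc ∫ y, min y a ∂μ ≤ ∫ _, a ∂μ :=
        integral_mono (integrable_min hnn ha) (integrable_const a) fun y => min_le_right _ _
    _ = a := by simp

/-- `ℓ` is concave with `ℓ(0) = 0`; only this consequence is needed. -/
lemma ell_mul_le (hnn : ∀ᵐ y ∂μ, 0 ≤ y) {a c : ℝ} (ha : 0 ≤ a) (hc : 1 ≤ c) :
    ell μ (c * a) ≤ c * ell μ a := by
  have hca : 0 ≤ c * a := by positivity
  rw [ell_eq hnn ha, ell_eq hnn hca, ← integral_const_mul]
  refine integral_mono_ae (integrable_min hnn hca) ((integrable_min hnn ha).const_mul c) ?_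
  filter_upwards [hnn] with y hy
  rw [mul_min_of_nonneg _ _ (by positivity : (0:ℝ) ≤ c)]
  exact min_le_min_right _ (by nlinarith)

lemma ell_pos (hnn : ∀ᵐ y ∂μ, 0 ≤ y) (harith : ¬ IsArith μ) {a : ℝ} (ha : 0 < a) :
    0 < ell μ a := by
  refine lt_of_le_of_ne (ell_nonneg hnn ha.le) fun h => harith ⟨1, one_pos, ?_⟩
  rw [ell_eq hnn ha.le, eq_comm, integral_eq_zero_iff_of_nonneg_ae] at h
  · rw [← measure_univ (μ := μ)]
    refine measure_congr ?_
    filter_upwards [h] with y hy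
    simp only [Pi.zero_apply] at hy
    have : y = 0 := by rcases min_choice y a with h' | h' <;> linarith
    refine propext ⟨fun _ => trivial, fun _ => ⟨0, by simp [this]⟩⟩
  · filter_upwards [hnn] with y hy using le_min hy ha.le
  · exact integrable_min hnn ha.le

/-- A weak form of Potter's bound, with exponent `1/4`: `ℓ(y)/ℓ(u) ≤ C (y/u)^{1/4}`. -/
lemma potter (hnn : ∀ᵐ y ∂μ, 0 ≤ y) (harith : ¬ IsArith μ) (hsv : SlowlyVarying (ell μ))
    {u₀ : ℝ} (hu₀ : 0 < u₀) :
    ∃ C, 0 < C ∧ ∀ u y, u₀ ≤ u → u ≤ y →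
      ell μ y ^ 4 ≤ C * (y / u) * ell μ u ^ 4 := by
  obtain ⟨u₁, hu₁⟩ : ∃ u₁, ∀ u, u₁ ≤ u → ell μ (2 * u) ^ 4 ≤ 2 * ell μ u ^ 4 := by
    have h := ((tendsto_ell_ratio hsv two_pos).pow 4).eventually_lt_const
      (show (1:ℝ) ^ 4 < 2 by norm_num)
    obtain ⟨u₁, h1⟩ := eventually_atTop.1 (h.and (eventually_gt_atTop 0))
    refine ⟨u₁, fun u hu => ?_⟩
    have h2 := h1 u hu
    have hp := ell_pos hnn harith h2.2
    rw [div_pow, div_lt_iff₀ (by positivity)] at h2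
    exact h2.1.le
  set w := max u₀ u₁ with hw
  have hw0 : 0 < w := lt_max_of_lt_left hu₀
  have dy : ∀ n : ℕ, ∀ u y, w ≤ u → u ≤ y → y ≤ 2 ^ n * u →
      ell μ y ^ 4 ≤ 2 ^ n * ell μ u ^ 4 := by
    intro n
    induction n with
    | zero =>
      intro u y h1 h2 h3
      have : y = u := le_antisymm (by simpa using h3) h2
      simp [this]
    | succ n ih =>
      intro u y h1 h2 h3
      have hu : 0 < u := hw0.trans_le h1
      have hd := hu₁ u ((le_max_right _ _).trans h1)
      rcases le_total y (2 * u) with h4 | h4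
      · have h5 : ell μ y ^ 4 ≤ ell μ (2 * u) ^ 4 :=
          pow_le_pow_left₀ (ell_nonneg hnn (by linarith)) (ell_mono hnn (by linarith) h4) 4
        have h6 : (1:ℝ) ≤ 2 ^ n := one_le_pow₀ (by norm_num)
        have h7 : 0 ≤ ell μ u ^ 4 := by positivity
        calc ell μ y ^ 4 ≤ 1 * (2 * ell μ u ^ 4) := by linarith
          _ ≤ 2 ^ n * (2 * ell μ u ^ 4) := by gcongr
          _ = _ := by ring
      · have h5 := ih (2 * u) y (by linarith) h4 (by rw [pow_succ] at h3; linarith)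
        calc ell μ y ^ 4 ≤ 2 ^ n * (2 * ell μ u ^ 4) := h5.trans (by gcongr)
          _ = _ := by ring
  have big : ∀ u y, w ≤ u → u ≤ y → ell μ y ^ 4 ≤ 2 * (y / u) * ell μ u ^ 4 := by
    intro u y h1 h2
    have hu : 0 < u := hw0.trans_le h1
    obtain ⟨n, hn1, hn2⟩ := exists_nat_pow_near (show 1 ≤ y / u by rwa [one_le_div hu])
      (one_lt_two)
    have h3 := dy (n + 1) u y h1 h2 ((div_lt_iff₀ hu).1 hn2).le
    refine h3.trans ?_
    have h7 : 0 ≤ ell μ u ^ 4 := by positivity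
    rw [pow_succ]
    nlinarith
  have h0 := ell_pos hnn harith hu₀
  have hwp := ell_pos hnn harith hw0
  have hwr : 1 ≤ ell μ w ^ 4 / ell μ u₀ ^ 4 := by
    rw [one_le_div (by positivity)]
    exact pow_le_pow_left₀ h0.le (ell_mono hnn hu₀.le (le_max_left _ _)) 4
  refine ⟨2 * (ell μ w ^ 4 / ell μ u₀ ^ 4), by positivity, fun u y h1 h2 => ?_⟩
  have hu : 0 < u := hu₀.trans_le h1
  have hyu : 1 ≤ y / u := by rwa [one_le_div hu]
  have h7 : 0 ≤ ell μ u ^ 4 := by positivity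
  rcases le_total w u with h3 | h3
  · refine (big u y h3 h2).trans ?_
    have : 0 ≤ (y / u) * ell μ u ^ 4 := by positivity
    nlinarith
  · have hm : ell μ (max y w) ^ 4 ≤ 2 * (max y w / w) * ell μ w ^ 4 := big w _ le_rfl (le_max_right _ _)
    have h4 : ell μ y ^ 4 ≤ ell μ (max y w) ^ 4 :=
      pow_le_pow_left₀ (ell_nonneg hnn (by linarith)) (ell_mono hnn (by linarith) (le_max_left _ _)) 4
    have h5 : max y w / w ≤ y / u := by
      rw [div_le_iff₀ hw0]
      refine max_le ?_ ?_
      · rw [div_mul_eq_mul_div, le_div_iff₀ hu]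
        exact mul_le_mul_of_nonneg_left h3 (by linarith)
      · nlinarith
    have h6 : ell μ w ^ 4 ≤ (ell μ w ^ 4 / ell μ u₀ ^ 4) * ell μ u ^ 4 := by
      rw [div_mul_eq_mul_div, le_div_iff₀ (by positivity)]
      exact mul_le_mul_of_nonneg_left
        (pow_le_pow_left₀ h0.le (ell_mono hnn hu₀.le h1) 4) (by positivity)
    calc ell μ y ^ 4 ≤ 2 * (max y w / w) * ell μ w ^ 4 := h4.trans hm
      _ ≤ 2 * (y / u) * ((ell μ w ^ 4 / ell μ u₀ ^ 4) * ell μ u ^ 4) := by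
          gcongr
      _ = _ := by ring

end Renew

namespace Renew

variable {μ : Measure ℝ}

/-! ### The renewal measure -/

lemma convPow_succ (n : ℕ) : convPow μ (n + 1) = (convPow μ n).conv μ := rfl

/-- The renewal measure as a genuine measure on `ℝ`. -/
noncomputable def Um (μ : Measure ℝ) : Measure ℝ := Measure.sum (convPow μ)

lemma renewal_eq {s : Set ℝ} (hs : MeasurableSet s) : renewal μ s = Um μ s := by
  rw [renewal, Um, Measure.sum_apply _ hs]

lemma convPow_nonneg (hnn : ∀ᵐ y ∂μ, 0 ≤ y) (n : ℕ) : ∀ᵐ y ∂(convPow μ n), 0 ≤ y := by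
  induction n with
  | zero => rw [convPow, ae_dirac_iff (measurableSet_Ici)]
  | succ n ih =>
    rw [convPow, ae_map_iff (by fun_prop) measurableSet_Ici]
    filter_upwards [Measure.quasiMeasurePreserving_fst.ae ih,
      Measure.quasiMeasurePreserving_snd.ae hnn] with p h1 h2 using add_nonneg h1 h2

lemma Um_nonneg (hnn : ∀ᵐ y ∂μ, 0 ≤ y) : ∀ᵐ y ∂(Um μ), 0 ≤ y := by
  rw [Um, Measure.ae_sum_iff]; exact convPow_nonneg hnn

variable [IsProbabilityMeasure μ]

instance instProbConvPow (n : ℕ) : IsProbabilityMeasure (convPow μ n) := by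
  induction n with
  | zero => exact Measure.dirac.isProbabilityMeasure
  | succ n ih => rw [convPow_succ]; infer_instance

lemma charFun_convPow (n : ℕ) (t : ℝ) : charFun (convPow μ n) t = charFun μ t ^ n := by
  induction n with
  | zero => simp [convPow]
  | succ n ih => rw [convPow_succ, charFun_conv, ih, pow_succ]

instance : SFinite (Um μ) := by unfold Um; infer_instance

lemma ell_max_meas (hnn : ∀ᵐ y ∂μ, 0 ≤ y) (x : ℝ) :
    Measurable (fun y => ell μ (max (x - y) 0)) := by
  refine Antitone.measurable fun a b hab => ell_mono hnn (le_max_right _ _) ?_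
  exact max_le_max_right _ (by linarith)

lemma ell_max_integrable (hnn : ∀ᵐ y ∂μ, 0 ≤ y) {x : ℝ} (hx : 0 ≤ x) (n : ℕ) :
    Integrable (fun y => ell μ (max (x - y) 0)) (convPow μ n) := by
  refine (integrable_const (ell μ x)).mono' (ell_max_meas hnn x).aestronglyMeasurable ?_
  filter_upwards [convPow_nonneg hnn n] with y hy
  rw [Real.norm_of_nonneg (ell_nonneg hnn (le_max_right _ _))]
  exact ell_mono hnn (le_max_right _ _) (max_le (by linarith) hx)

/-- One step of the walk increases `E[min(S_n, x)]` by `E[ℓ((x - S_n)⁺)]`, because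
`min(y + z, x) = min(y, x) + min(z, (x - y)⁺)`. -/
lemma step_min (hnn : ∀ᵐ y ∂μ, 0 ≤ y) {x : ℝ} (hx : 0 ≤ x) (n : ℕ) :
    ∫ y, min y x ∂(convPow μ (n + 1)) =
      ∫ y, min y x ∂(convPow μ n) + ∫ y, ell μ (max (x - y) 0) ∂(convPow μ n) := by
  have hi := integrable_min (convPow_nonneg hnn (n + 1)) hx
  rw [← integral_add (integrable_min (convPow_nonneg hnn n) hx) (ell_max_integrable hnn hx n)]
  rw [convPow_succ] at hi ⊢
  rw [integral_conv hi]
  refine integral_congr_ae ?_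
  filter_upwards [convPow_nonneg hnn n] with y hy
  have hm : 0 ≤ max (x - y) 0 := le_max_right _ _
  rw [ell_eq hnn hm]
  have : ∫ z, min (y + z) x ∂μ = ∫ z, (min y x + min z (max (x - y) 0)) ∂μ := by
    refine integral_congr_ae ?_
    filter_upwards [hnn] with z hz
    rcases le_total y x with h | h
    · rw [max_eq_left (by linarith), min_eq_left h, ← min_add_add_left]
      congr 1; ring
    · rw [max_eq_right (by linarith), min_eq_right h, min_eq_right (by linarith), min_eq_right hz]
      simp
  rw [this, integral_add (integrable_const _) (integrable_min hnn hm)]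
  simp

/-- `step_min` telescopes, starting from `min(S_0, x) = 0`. -/
lemma sum_ell (hnn : ∀ᵐ y ∂μ, 0 ≤ y) {x : ℝ} (hx : 0 ≤ x) (N : ℕ) :
    ∑ n ∈ Finset.range N, ∫ y, ell μ (max (x - y) 0) ∂(convPow μ n) =
      ∫ y, min y x ∂(convPow μ N) := by
  induction N with
  | zero => simp [convPow, hx]
  | succ N ih => rw [Finset.sum_range_succ, ih, step_min hnn hx]

lemma sum_ell_le (hnn : ∀ᵐ y ∂μ, 0 ≤ y) {x : ℝ} (hx : 0 ≤ x) (N : ℕ) :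
    ∫ y, min y x ∂(convPow μ N) ≤ x := by
  calc ∫ y, min y x ∂(convPow μ N) ≤ ∫ _, x ∂(convPow μ N) :=
        integral_mono (integrable_min (convPow_nonneg hnn N) hx) (integrable_const x)
          fun y => min_le_right _ _
    _ = x := by simp

/-- Truncate at level `x + d`: on `{S_n ≤ x}` the increment in `sum_ell` is at least `ℓ(d)`. -/
lemma partial_bound (hnn : ∀ᵐ y ∂μ, 0 ≤ y) {x d : ℝ} (hx : 0 ≤ x) (hd : 0 ≤ d) (N : ℕ) :
    ell μ d * ∑ n ∈ Finset.range N, (convPow μ n).real (Iic x) ≤ x + d := by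
  refine le_trans ?_ (sum_ell_le hnn (add_nonneg hx hd) N)
  rw [← sum_ell hnn (add_nonneg hx hd), Finset.mul_sum]
  refine Finset.sum_le_sum fun n _ => ?_
  have h1 : ell μ d * (convPow μ n).real (Iic x) =
      ∫ y, (Iic x).indicator (fun _ => ell μ d) y ∂(convPow μ n) := by
    rw [integral_indicator measurableSet_Iic]; simp [mul_comm]
  rw [h1]
  refine integral_mono ((integrable_const _).indicator measurableSet_Iic)
    (ell_max_integrable hnn (add_nonneg hx hd) n) fun y => ?_
  by_cases hy : y ∈ Iic x
  · rw [indicator_of_mem hy]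
    exact ell_mono hnn hd (le_max_of_le_left (by have : y ≤ x := hy; linarith))
  · rw [indicator_of_notMem hy]
    exact ell_nonneg hnn (le_max_right _ _)

lemma summable_Iic (hnn : ∀ᵐ y ∂μ, 0 ≤ y) (harith : ¬ IsArith μ) (x : ℝ) :
    Summable fun n => (convPow μ n).real (Iic x) := by
  have h0 : 0 ≤ max x 0 := le_max_right _ _
  refine Summable.of_nonneg_of_le (f := fun n => (convPow μ n).real (Iic (max x 0)))
    (fun _ => measureReal_nonneg)
    (fun n => measureReal_mono (Iic_subset_Iic.2 (le_max_left _ _))) ?_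
  refine summable_of_sum_range_le (c := (max x 0 + 1) / ell μ 1) (fun _ => measureReal_nonneg)
    fun N => ?_
  rw [le_div_iff₀ (ell_pos hnn harith one_pos), mul_comm]
  exact partial_bound hnn h0 zero_le_one N

lemma Um_lt_top (hnn : ∀ᵐ y ∂μ, 0 ≤ y) (harith : ¬ IsArith μ) (x : ℝ) :
    Um μ (Iic x) < ⊤ := by
  rw [Um, Measure.sum_apply _ measurableSet_Iic]
  have := (summable_Iic hnn harith x).tsum_ofReal_lt_top
  simpa [ofReal_measureReal] using this

lemma Um_real (x : ℝ) :
    (Um μ).real (Iic x) = ∑' n, (convPow μ n).real (Iic x) := by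
  rw [measureReal_def, Um, Measure.sum_apply _ measurableSet_Iic, ENNReal.tsum_toReal_eq]
  · rfl
  · intro n; exact measure_ne_top _ _

/-- Upper bound for the renewal function: `ℓ(d) U[0, x] ≤ x + d`. -/
lemma U_upper (hnn : ∀ᵐ y ∂μ, 0 ≤ y) (harith : ¬ IsArith μ) {x d : ℝ} (hx : 0 ≤ x)
    (hd : 0 < d) : ell μ d * (Um μ).real (Iic x) ≤ x + d := by
  rw [mul_comm, ← le_div_iff₀ (ell_pos hnn harith hd), Um_real]
  refine (summable_Iic hnn harith x).tsum_le_of_sum_range_le fun N => ?_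
  rw [le_div_iff₀ (ell_pos hnn harith hd), mul_comm]
  exact partial_bound hnn hx hd.le N

/-- Lower bound for the renewal function: `x ≤ ℓ(x) U[0, x]`. -/
lemma U_lower (hnn : ∀ᵐ y ∂μ, 0 ≤ y) (harith : ¬ IsArith μ) {x : ℝ} (hx : 0 ≤ x) :
    x ≤ ell μ x * (Um μ).real (Iic x) := by
  have hs := summable_Iic hnn harith x
  have hup : ∀ N, ∫ y, min y x ∂(convPow μ N) ≤ ell μ x * (Um μ).real (Iic x) := by
    intro N
    rw [← sum_ell hnn hx, Um_real]
    refine le_trans ?_ (mul_le_mul_of_nonneg_left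
      (hs.sum_le_tsum (Finset.range N) fun _ _ => measureReal_nonneg) (ell_nonneg hnn hx))
    rw [Finset.mul_sum]
    refine Finset.sum_le_sum fun n _ => ?_
    have h1 : ell μ x * (convPow μ n).real (Iic x) =
        ∫ y, (Iic x).indicator (fun _ => ell μ x) y ∂(convPow μ n) := by
      rw [integral_indicator measurableSet_Iic]; simp [mul_comm]
    rw [h1]
    refine integral_mono_ae (ell_max_integrable hnn hx n)
      ((integrable_const _).indicator measurableSet_Iic) ?_
    filter_upwards [convPow_nonneg hnn n] with y hy0
    by_cases hy : y ∈ Iic x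
    · rw [indicator_of_mem hy]
      exact ell_mono hnn (le_max_right _ _) (max_le (by linarith) hx)
    · rw [indicator_of_notMem hy, max_eq_right (by have : x < y := not_le.1 hy; linarith)]
      exact ell_le hnn le_rfl
  have hlow : ∀ N, x - x * (convPow μ N).real (Iic x) ≤ ∫ y, min y x ∂(convPow μ N) := by
    intro N
    have h1 : x - x * (convPow μ N).real (Iic x) =
        ∫ y, (x - (Iic x).indicator (fun _ => x) y) ∂(convPow μ N) := by
      rw [integral_sub (integrable_const _) ((integrable_const _).indicator measurableSet_Iic),
        integral_indicator measurableSet_Iic]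
      simp [mul_comm]
    rw [h1]
    refine integral_mono_ae
      ((integrable_const _).sub ((integrable_const _).indicator measurableSet_Iic))
      (integrable_min (convPow_nonneg hnn N) hx) ?_
    filter_upwards [convPow_nonneg hnn N] with y hy0
    by_cases hy : y ∈ Iic x
    · rw [indicator_of_mem hy]
      simpa using ⟨hy0, hx⟩
    · rw [indicator_of_notMem hy, min_eq_right (show x < y from not_le.1 hy).le]; simp
  have hlim : Tendsto (fun N => x - x * (convPow μ N).real (Iic x)) atTop (𝓝 (x - x * 0)) :=
    (hs.tendsto_atTop_zero.const_mul x).const_sub x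
  rw [mul_zero, sub_zero] at hlim
  exact le_of_tendsto' hlim fun N => (hlow N).trans (hup N)

/-- The renewal function is asymptotic to `x / ℓ(x)`, at every multiple of `x`. -/
lemma tendsto_U (hnn : ∀ᵐ y ∂μ, 0 ≤ y) (harith : ¬ IsArith μ) (hsv : SlowlyVarying (ell μ))
    {c : ℝ} (hc : 0 < c) :
    Tendsto (fun x => ell μ x * (Um μ).real (Iic (c * x)) / x) atTop (𝓝 c) := by
  rw [tendsto_order]
  constructor
  · intro a ha
    have h1 : Tendsto (fun x => c * (ell μ (c * x) / ell μ x)⁻¹) atTop (𝓝 (c * 1⁻¹)) :=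
      ((tendsto_ell_ratio hsv hc).inv₀ one_ne_zero).const_mul c
    rw [inv_one, mul_one] at h1
    filter_upwards [h1.eventually_const_lt ha, eventually_gt_atTop 0] with x hx hx0
    refine hx.trans_le ?_
    have h2 := U_lower hnn harith (mul_pos hc hx0).le
    have h3 := ell_pos hnn harith (mul_pos hc hx0)
    have h4 := ell_pos hnn harith hx0
    rw [inv_div, le_div_iff₀ hx0, mul_div_assoc', div_mul_eq_mul_div, div_le_iff₀ h3]
    nlinarith
  · intro b hb
    obtain ⟨d, hd1, hd2⟩ := exists_between hb
    have hd0 : 0 < d - c := by linarith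
    have h1 : Tendsto (fun x => d * (ell μ ((d - c) * x) / ell μ x)⁻¹) atTop (𝓝 (d * 1⁻¹)) :=
      ((tendsto_ell_ratio hsv hd0).inv₀ one_ne_zero).const_mul d
    rw [inv_one, mul_one] at h1
    filter_upwards [h1.eventually_lt_const hd2, eventually_gt_atTop 0] with x hx hx0
    refine lt_of_le_of_lt ?_ hx
    have h2 := U_upper hnn harith (mul_pos hc hx0).le (mul_pos hd0 hx0)
    have h3 := ell_pos hnn harith (mul_pos hd0 hx0)
    have h4 := ell_pos hnn harith hx0
    rw [inv_div, div_le_iff₀ hx0, mul_div_assoc', div_mul_eq_mul_div, le_div_iff₀ h3]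
    nlinarith

end Renew

namespace Renew

variable {μ : Measure ℝ} [IsProbabilityMeasure μ]

/-! ### Bounds for the characteristic function -/

lemma mul_min_inv {t x : ℝ} (ht : 0 < t) (c : ℝ) : min (t * x) c = t * min x (c / t) := by
  rw [mul_min_of_nonneg _ _ ht.le, mul_div_cancel₀ _ ht.ne']

lemma exp_integrable (t : ℝ) : Integrable (fun x : ℝ => Complex.exp (t * x * Complex.I)) μ := by
  refine (integrable_const (1:ℝ)).mono' (by fun_prop) (ae_of_all _ fun x => ?_)
  rw [← Complex.ofReal_mul, Complex.norm_exp_ofReal_mul_I]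

/-- The modulus of continuity of the characteristic function is controlled by `ℓ`, because
`|e^{iu} - 1| ≤ 2 min(|u|, 1)` and `E[min(d X, 1)] = d ℓ(1/d)`. -/
lemma norm_charFun_sub (hnn : ∀ᵐ y ∂μ, 0 ≤ y) {t s : ℝ} (hts : t ≠ s) :
    ‖charFun μ t - charFun μ s‖ ≤ 2 * (|t - s| * ell μ (1 / |t - s|)) := by
  have hd : 0 < |t - s| := abs_pos.2 (sub_ne_zero.2 hts)
  have hd1 : 0 ≤ 1 / |t - s| := by positivity
  rw [charFun_apply_real, charFun_apply_real, ← integral_sub (exp_integrable t) (exp_integrable s),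
    ell_eq hnn hd1, ← integral_const_mul, ← integral_const_mul]
  refine norm_integral_le_of_norm_le (((integrable_min hnn hd1).const_mul _).const_mul _) ?_
  filter_upwards [hnn] with x hx
  have h1 : Complex.exp (t * x * Complex.I) - Complex.exp (s * x * Complex.I) =
      Complex.exp ((s * x : ℝ) * Complex.I) *
        (Complex.exp (Complex.I * ((t - s) * x : ℝ)) - 1) := by
    rw [mul_sub, ← Complex.exp_add, mul_one]
    push_cast
    congr 2
    ring
  rw [h1, norm_mul, Complex.norm_exp_ofReal_mul_I, one_mul, ← mul_min_inv hd]
  have h2 : ‖Complex.exp (Complex.I * ((t - s) * x : ℝ)) - 1‖ ≤ |t - s| * x := by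
    refine Real.norm_exp_I_mul_ofReal_sub_one_le.trans ?_
    rw [Real.norm_eq_abs, abs_mul, abs_of_nonneg hx]
  have h3 : ‖Complex.exp (Complex.I * ((t - s) * x : ℝ)) - 1‖ ≤ 2 := by
    refine (norm_sub_le _ _).trans ?_
    rw [Complex.norm_exp_I_mul_ofReal]; norm_num
  have h4 : 0 ≤ |t - s| * x := by positivity
  rcases min_cases (|t - s| * x) 1 with h | h <;> linarith

/-- A lower bound for `sin` by truncations. Once `u = tX` is integrated, slow variation makes the
difference of the two truncations negligible. -/
lemma sin_lower {u : ℝ} (hu : 0 ≤ u) :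
    (1 / 2) * min u 1 - 3 * (min u 2 - min u 1) ≤ Real.sin u := by
  have hpi := Real.pi_gt_three
  have hpi4 := Real.pi_lt_four
  rcases le_total u (Real.pi / 2) with h | h
  · have h1 := Real.mul_le_sin hu h
    have h2 : 1 / 2 * u ≤ 2 / Real.pi * u := by
      refine mul_le_mul_of_nonneg_right ?_ hu
      rw [div_le_div_iff₀ (by norm_num) Real.pi_pos]; linarith
    have h3 := min_le_left u 1
    have h4 : min u 1 ≤ min u 2 := min_le_min_left _ (by norm_num)
    linarith
  · rw [min_eq_right (show (1:ℝ) ≤ u by linarith)]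
    have h3 : 3 / 2 ≤ min u 2 := le_min (by linarith) (by norm_num)
    have := Real.neg_one_le_sin u
    linarith

lemma im_charFun (t : ℝ) : (charFun μ t).im = ∫ x, Real.sin (t * x) ∂μ := by
  rw [charFun_apply_real]
  have h := integral_im (exp_integrable (μ := μ) t)
  simp only [RCLike.im_eq_complex_im] at h
  rw [← h]
  refine integral_congr_ae (ae_of_all _ fun x => ?_)
  simp only
  rw [← Complex.ofReal_mul, Complex.exp_ofReal_mul_I_im]

lemma re_charFun (t : ℝ) : (charFun μ t).re = ∫ x, Real.cos (t * x) ∂μ := by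
  rw [charFun_apply_real]
  have h := integral_re (exp_integrable (μ := μ) t)
  simp only [RCLike.re_eq_complex_re] at h
  rw [← h]
  refine integral_congr_ae (ae_of_all _ fun x => ?_)
  simp only
  rw [← Complex.ofReal_mul, Complex.exp_ofReal_mul_I_re]

/-- If `φ(t) = 1` then `cos(tX) = 1` almost surely, so `X` lies in the lattice `(2π/|t|) ℤ`. -/
lemma charFun_ne_one (harith : ¬ IsArith μ) {t : ℝ} (ht : t ≠ 0) : charFun μ t ≠ 1 := by
  intro h
  have h1 : ∫ x, Real.cos (t * x) ∂μ = 1 := by rw [← re_charFun, h, Complex.one_re]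
  have hc : Integrable (fun x => Real.cos (t * x)) μ :=
    (integrable_const (1:ℝ)).mono' (by fun_prop) (ae_of_all _ fun x => Real.abs_cos_le_one _)
  have h2 : ∫ x, (1 - Real.cos (t * x)) ∂μ = 0 := by
    rw [integral_sub (integrable_const _) hc, h1]; simp
  rw [integral_eq_zero_iff_of_nonneg (fun x => sub_nonneg.2 (Real.cos_le_one _))
    ((integrable_const _).sub hc)] at h2
  refine harith ⟨2 * Real.pi / |t|, by positivity, ?_⟩
  rw [← measure_univ (μ := μ)]
  refine measure_congr ?_
  filter_upwards [h2] with x hx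
  refine propext ⟨fun _ => trivial, fun _ => ?_⟩
  have h3 : Real.cos (t * x) = 1 := by simp only [Pi.zero_apply] at hx; linarith
  obtain ⟨n, hn⟩ := (Real.cos_eq_one_iff _).1 h3
  rcases lt_or_gt_of_ne ht with h0 | h0
  · refine ⟨-n, ?_⟩
    rw [abs_of_neg h0]
    push_cast
    field_simp
    linarith
  · refine ⟨n, ?_⟩
    rw [abs_of_pos h0]
    field_simp
    linarith

/-- Near `0` the imaginary part alone already has size comparable to `|t| ℓ(1/|t|)`. -/
lemma charFun_lower_near (hnn : ∀ᵐ y ∂μ, 0 ≤ y) (hsv : SlowlyVarying (ell μ)) :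
    ∃ δ > 0, ∀ t, 0 < t → t ≤ δ → 1 / 4 * (t * ell μ (1 / t)) ≤ ‖1 - charFun μ t‖ := by
  have h := ((tendsto_ell_ratio hsv two_pos).eventually_lt_const
      (show (1:ℝ) < 1 + 1 / 12 by norm_num)).and hsv.1
  obtain ⟨a, ha⟩ := eventually_atTop.1 h
  refine ⟨1 / max a 1, by positivity, fun t ht htd => ?_⟩
  have hat : a ≤ 1 / t := by
    rw [le_div_iff₀ ht]
    rw [le_div_iff₀ (by positivity)] at htd
    nlinarith [le_max_left a 1]
  obtain ⟨h1, h2⟩ := ha _ hat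
  rw [div_lt_iff₀ h2] at h1
  have hi1 := integrable_min hnn (show 0 ≤ 1 / t by positivity)
  have hi2 := integrable_min hnn (show 0 ≤ 2 / t by positivity)
  have hs : Integrable (fun x => Real.sin (t * x)) μ :=
    (integrable_const (1:ℝ)).mono' (by fun_prop) (ae_of_all _ fun x => Real.abs_sin_le_one _)
  have h3 : 1 / 2 * (t * ell μ (1 / t)) - 3 * (t * ell μ (2 / t) - t * ell μ (1 / t)) ≤
      ∫ x, Real.sin (t * x) ∂μ := by
    rw [ell_eq hnn (by positivity : 0 ≤ 1 / t), ell_eq hnn (by positivity : 0 ≤ 2 / t)]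
    have hA : Integrable (fun x => 1 / 2 * (t * min x (1 / t))) μ := (hi1.const_mul _).const_mul _
    have hB : Integrable (fun x => 3 * (t * min x (2 / t) - t * min x (1 / t))) μ :=
      ((hi2.const_mul _).sub (hi1.const_mul _)).const_mul _
    have e : 1 / 2 * (t * ∫ x, min x (1 / t) ∂μ) -
        3 * (t * ∫ x, min x (2 / t) ∂μ - t * ∫ x, min x (1 / t) ∂μ) =
        ∫ x, (1 / 2 * (t * min x (1 / t)) - 3 * (t * min x (2 / t) - t * min x (1 / t))) ∂μ := by
      rw [integral_sub hA hB, integral_const_mul, integral_const_mul, integral_const_mul,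
        integral_sub (hi2.const_mul _) (hi1.const_mul _), integral_const_mul, integral_const_mul]
    rw [e]
    refine integral_mono_ae (hA.sub hB) hs ?_
    filter_upwards [hnn] with x hx
    have := sin_lower (mul_nonneg ht.le hx)
    rw [mul_min_inv ht, mul_min_inv ht] at this
    exact this
  have h4 : ∫ x, Real.sin (t * x) ∂μ ≤ ‖1 - charFun μ t‖ := by
    refine le_trans ?_ (Complex.abs_im_le_norm _)
    rw [Complex.sub_im, Complex.one_im, zero_sub, abs_neg, im_charFun]
    exact le_abs_self _
  have h5 : t * ell μ (2 / t) ≤ t * ((1 + 1 / 12) * ell μ (1 / t)) := by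
    refine mul_le_mul_of_nonneg_left ?_ ht.le
    rw [show 2 / t = 2 * (1 / t) by ring]
    exact h1.le
  linarith

/-- `|1 - φ(t)|` is at least a multiple of `|t| ℓ(1/|t|)`, uniformly on `|t| ≤ T`: near the origin by
`charFun_lower_near`, away from it by compactness and `charFun_ne_one`. -/
lemma charFun_lower (hnn : ∀ᵐ y ∂μ, 0 ≤ y) (harith : ¬ IsArith μ) (hsv : SlowlyVarying (ell μ))
    (T : ℝ) :
    ∃ c > 0, ∀ t, t ≠ 0 → |t| ≤ T → c * (|t| * ell μ (1 / |t|)) ≤ ‖1 - charFun μ t‖ := by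
  obtain ⟨δ, hδ, h1⟩ := charFun_lower_near hnn hsv
  have hcont : ContinuousOn (fun t => ‖1 - charFun μ t‖) (Icc δ (max δ T)) := by
    have : Continuous (charFun μ) := continuous_charFun
    fun_prop
  obtain ⟨t₀, ht₀, hmin⟩ := isCompact_Icc.exists_isMinOn
    (nonempty_Icc.2 (le_max_left δ T)) hcont
  have ht₀0 : t₀ ≠ 0 := (hδ.trans_le ht₀.1).ne'
  have hpos : 0 < ‖1 - charFun μ t₀‖ :=
    norm_pos_iff.2 (sub_ne_zero.2 (charFun_ne_one harith ht₀0).symm)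
  have key : ∀ t, 0 < t → t ≤ T →
      min (1 / 4) ‖1 - charFun μ t₀‖ * (t * ell μ (1 / t)) ≤ ‖1 - charFun μ t‖ := by
    intro t ht htT
    have hl0 : 0 ≤ t * ell μ (1 / t) := mul_nonneg ht.le (ell_nonneg hnn (by positivity))
    rcases le_total t δ with h | h
    · exact (mul_le_mul_of_nonneg_right (min_le_left _ _) hl0).trans (h1 t ht h)
    · have h2 : ‖1 - charFun μ t₀‖ ≤ ‖1 - charFun μ t‖ := hmin ⟨h, le_max_of_le_right htT⟩
      have h3 : t * ell μ (1 / t) ≤ 1 := by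
        calc t * ell μ (1 / t) ≤ t * (1 / t) :=
              mul_le_mul_of_nonneg_left (ell_le hnn (by positivity)) ht.le
          _ = 1 := by field_simp
      calc _ ≤ ‖1 - charFun μ t₀‖ * 1 :=
            mul_le_mul (min_le_right _ _) h3 hl0 (norm_nonneg _)
        _ ≤ _ := by linarith
  refine ⟨min (1 / 4) ‖1 - charFun μ t₀‖, by positivity, fun t ht0 htT => ?_⟩
  refine (key |t| (abs_pos.2 ht0) htT).trans (le_of_eq ?_)
  rcases abs_choice t with h | h
  · rw [h]
  · rw [h, charFun_neg, ← Complex.norm_conj]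
    simp

/-- Damping by `r ≤ 1` costs at most a factor `2`, since `|1 - rφ| ≥ 1 - r`. -/
lemma norm_damped {z : ℂ} (hz : ‖z‖ ≤ 1) {r : ℝ} (h0 : 0 ≤ r) (h1 : r ≤ 1) :
    ‖1 - z‖ ≤ 2 * ‖1 - r * z‖ := by
  have h2 : ‖(1 - z) - (1 - r * z)‖ ≤ 1 - r := by
    rw [show (1 - z) - (1 - r * z) = -((1 - r : ℝ) * z) by push_cast; ring, norm_neg, norm_mul,
      Complex.norm_real, Real.norm_of_nonneg (by linarith)]
    nlinarith
  have h3 : 1 - r ≤ ‖1 - r * z‖ := by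
    have := norm_sub_norm_le (1:ℂ) (r * z)
    rw [norm_one, norm_mul, Complex.norm_real, Real.norm_of_nonneg h0] at this
    nlinarith
  have h4 := norm_sub_norm_le (1 - z) (1 - r * z)
  linarith

end Renew

namespace Renew

/-! ### Oscillatory integrals -/

/-- Shifting by half a period `p = π/|w|` flips the sign of `e^{itw}`; averaging the integral with
its shift replaces `g` by the difference `g(t) - g(t + p)`, up to a boundary term. -/
lemma osc_half {g : ℝ → ℂ} (hg : Integrable g) {a w B : ℝ} (hw : w ≠ 0) {D : ℝ → ℝ}
    (hB : ∀ t, a < t → ‖g t‖ ≤ B)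
    (hD : ∀ t, a < t → ‖g t - g (t + Real.pi / |w|)‖ ≤ D t) (hDi : IntegrableOn D (Ioi a)) :
    2 * ‖∫ t in Ioi a, Complex.exp (t * w * Complex.I) * g t‖ ≤
      (∫ t in Ioi a, D t) + Real.pi / |w| * B := by
  set p := Real.pi / |w| with hp
  have hp0 : 0 < p := div_pos Real.pi_pos (abs_pos.2 hw)
  have nexp : ∀ t : ℝ, ‖Complex.exp (t * w * Complex.I)‖ = 1 := fun t => by
    rw [← Complex.ofReal_mul, Complex.norm_exp_ofReal_mul_I]
  have hflip : ∀ t : ℝ, Complex.exp ((t + p : ℝ) * w * Complex.I) =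
      -Complex.exp (t * w * Complex.I) := by
    intro t
    rcases lt_or_gt_of_ne hw with h | h
    · have : p * w = -Real.pi := by rw [hp, abs_of_neg h]; field_simp
      rw [show ((t + p : ℝ) * w * Complex.I : ℂ) = t * w * Complex.I + ((p * w : ℝ)) * Complex.I by
        push_cast; ring, this, Complex.exp_add]
      push_cast
      rw [neg_mul, Complex.exp_neg, Complex.exp_pi_mul_I]; norm_num
    · have : p * w = Real.pi := by rw [hp, abs_of_pos h]; field_simp
      rw [show ((t + p : ℝ) * w * Complex.I : ℂ) = t * w * Complex.I + ((p * w : ℝ)) * Complex.I by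
        push_cast; ring, this, Complex.exp_add, Complex.exp_pi_mul_I]
      ring
  have mulint : ∀ f : ℝ → ℂ, Integrable f →
      Integrable (fun t : ℝ => Complex.exp (t * w * Complex.I) * f t) := by
    intro f hf
    refine hf.norm.mono' (AEStronglyMeasurable.mul (by fun_prop) hf.aestronglyMeasurable)
      (ae_of_all _ fun t => ?_)
    rw [norm_mul, nexp, one_mul]
  have hgs : Integrable (fun t => g (t + p)) := hg.comp_add_right p
  have negint : Integrable (fun t : ℝ => -(Complex.exp (t * w * Complex.I) * g (t + p))) :=
    (mulint _ hgs).neg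
  have e1 : ∫ t in Ioi a, Complex.exp (t * w * Complex.I) * g t =
      ∫ t in Ioi (a - p), -(Complex.exp (t * w * Complex.I) * g (t + p)) := by
    rw [← integral_indicator measurableSet_Ioi, ← integral_indicator measurableSet_Ioi,
      ← integral_add_right_eq_self _ p]
    congr 1
    ext t
    by_cases h : t ∈ Ioi (a - p)
    · have h' : t + p ∈ Ioi a := by have : a - p < t := h; show a < t + p; linarith
      rw [indicator_of_mem h, indicator_of_mem h', hflip, neg_mul]
    · have h' : t + p ∉ Ioi a := fun h2 => h (by
        have : a < t + p := h2
        show a - p < t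
        linarith)
      rw [indicator_of_notMem h, indicator_of_notMem h']
  have e2 : ∫ t in Ioi (a - p), -(Complex.exp (t * w * Complex.I) * g (t + p)) =
      (∫ t in Ioc (a - p) a, -(Complex.exp (t * w * Complex.I) * g (t + p))) +
      ∫ t in Ioi a, -(Complex.exp (t * w * Complex.I) * g (t + p)) := by
    rw [← setIntegral_union (Ioc_disjoint_Ioi le_rfl) measurableSet_Ioi
      negint.integrableOn negint.integrableOn,
      Ioc_union_Ioi_eq_Ioi (by linarith)]
  have e3 : (2:ℂ) * ∫ t in Ioi a, Complex.exp (t * w * Complex.I) * g t =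
      (∫ t in Ioi a, Complex.exp (t * w * Complex.I) * (g t - g (t + p))) +
      ∫ t in Ioc (a - p) a, -(Complex.exp (t * w * Complex.I) * g (t + p)) := by
    have e4 : ∫ t in Ioi a, Complex.exp (t * w * Complex.I) * (g t - g (t + p)) =
        (∫ t in Ioi a, Complex.exp (t * w * Complex.I) * g t) +
        ∫ t in Ioi a, -(Complex.exp (t * w * Complex.I) * g (t + p)) := by
      rw [← integral_add (mulint _ hg).integrableOn negint.integrableOn]
      congr 1; ext t; ring
    rw [e4, two_mul]
    nth_rewrite 2 [e1]
    rw [e2]; ring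
  have n1 : ‖∫ t in Ioi a, Complex.exp (t * w * Complex.I) * (g t - g (t + p))‖ ≤
      ∫ t in Ioi a, D t := by
    refine norm_integral_le_of_norm_le hDi ?_
    filter_upwards [ae_restrict_mem measurableSet_Ioi] with t ht
    rw [norm_mul, nexp, one_mul]; exact hD t ht
  have n2 : ‖∫ t in Ioc (a - p) a, -(Complex.exp (t * w * Complex.I) * g (t + p))‖ ≤ p * B := by
    have := norm_setIntegral_le_of_norm_le_const (μ := volume) (s := Ioc (a - p) a) (C := B)
      (f := fun t : ℝ => -(Complex.exp (t * w * Complex.I) * g (t + p))) (by simp) (fun t ht => by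
        rw [norm_neg, norm_mul, nexp, one_mul]
        exact hB _ (by have := ht.1; linarith))
    refine this.trans (le_of_eq ?_)
    rw [Real.volume_real_Ioc_of_le (by linarith)]; ring
  calc 2 * ‖∫ t in Ioi a, Complex.exp (t * w * Complex.I) * g t‖
      = ‖(2:ℂ) * ∫ t in Ioi a, Complex.exp (t * w * Complex.I) * g t‖ := by
        rw [norm_mul]; norm_num
    _ ≤ _ := by rw [e3]; exact (norm_add_le _ _).trans (add_le_add n1 n2)

variable {μ : Measure ℝ} [IsProbabilityMeasure μ]

lemma mul_ell_inv_mono (hnn : ∀ᵐ y ∂μ, 0 ≤ y) {s t : ℝ} (hs : 0 < s) (hst : s ≤ t) :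
    s * ell μ (1 / s) ≤ t * ell μ (1 / t) := by
  have ht : 0 < t := hs.trans_le hst
  have h := ell_mul_le hnn (a := 1 / t) (c := t / s) (by positivity) (by rwa [one_le_div hs])
  rw [show t / s * (1 / t) = 1 / s by field_simp] at h
  calc s * ell μ (1 / s) ≤ s * (t / s * ell μ (1 / t)) := mul_le_mul_of_nonneg_left h hs.le
    _ = _ := by field_simp

lemma integrable_quot {k : ℝ → ℝ} {ψ : ℝ → ℂ} {T : ℝ} (hk : Continuous k)
    (hkT : ∀ t, T ≤ |t| → k t = 0) (hψ : Continuous ψ) (h1 : ∀ t, 1 - ψ t ≠ 0) :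
    Integrable (fun t => (k t : ℂ) / (1 - ψ t)) := by
  refine Continuous.integrable_of_hasCompactSupport ?_ ?_
  · exact (Complex.continuous_ofReal.comp hk).div (continuous_const.sub hψ) h1
  · refine HasCompactSupport.of_support_subset_isCompact (isCompact_Icc (a := -T) (b := T)) ?_
    intro t ht
    rw [mem_Icc, ← abs_le]
    by_contra h
    exact ht (by simp [hkT t (not_le.1 h).le])

set_option maxHeartbeats 1000000 in
/-- The part of the Fourier integral with `t > A/x` is `O(1/(A ℓ(x)))`. -/
lemma osc_bound (hnn : ∀ᵐ y ∂μ, 0 ≤ y) (harith : ¬ IsArith μ) (hsv : SlowlyVarying (ell μ))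
    {T M c : ℝ} (hT : 0 < T) (hM : 0 ≤ M) (hc : 0 < c) :
    ∃ C > 0, ∀ (k : ℝ → ℝ) (ψ : ℝ → ℂ), LipschitzWith 1 k → (∀ t, T ≤ |t| → k t = 0) →
      (∀ t, |k t| ≤ M) → Continuous ψ → (∀ t, 1 - ψ t ≠ 0) →
      (∀ t, 0 < t → t ≤ T → c * (t * ell μ (1 / t)) ≤ ‖1 - ψ t‖) →
      (∀ t p, 0 < p → ‖ψ (t + p) - ψ t‖ ≤ 2 * (p * ell μ (1 / p))) →
      ∀ A x w, 1 ≤ A → A / T ≤ x → x ≤ |w| → |w| ≤ 2 * x →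
        ‖∫ t in Ioi (A / x), Complex.exp (t * w * Complex.I) * ((k t : ℂ) / (1 - ψ t))‖ ≤
          C * (ell μ (2 * x) / (A * ell μ (x / A) ^ 2)) := by
  obtain ⟨P, hP, hpot⟩ := potter hnn harith hsv (show 0 < 1 / T by positivity)
  have hl0 := ell_pos hnn harith (show 0 < 1 / T by positivity)
  set l₀ := ell μ (1 / T) with hl₀
  refine ⟨Real.pi * ((1 / c / l₀ + 2 * M / c ^ 2) * (2 * Real.sqrt P) + M / c), by positivity, ?_⟩
  intro k ψ hk hkT hkM hψ h1 hlow hinc A x w hA hx hw1 hw2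
  have hA0 : 0 < A := by linarith
  have hx0 : 0 < x := lt_of_lt_of_le (by positivity) hx
  have hw0 : 0 < |w| := hx0.trans_le hw1
  have hw : w ≠ 0 := abs_pos.1 hw0
  set a := A / x with ha
  have ha0 : 0 < a := by positivity
  have hxa : x / A = 1 / a := by rw [ha]; field_simp
  rw [hxa]
  set p := Real.pi / |w| with hp
  have hp0 : 0 < p := by positivity
  have hxT : 1 / T ≤ x := le_trans (by gcongr) hx
  have haT : a ≤ T := by
    rw [ha, div_le_iff₀ hx0]; rw [div_le_iff₀ hT] at hx; linarith
  have hY : 0 < ell μ (1 / a) := ell_pos hnn harith (by positivity)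
  set Y := ell μ (1 / a) with hYd
  set Z := ell μ (2 * x) with hZd
  have hZ : l₀ ≤ Z := ell_mono hnn (by positivity) (by linarith)
  have hYZ : Y ≤ Z := by
    refine ell_mono hnn (by positivity) ?_
    rw [← hxa, div_le_iff₀ hA0]; nlinarith
  have hZ0 : 0 < Z := hl0.trans_le hZ
  have hpl : p * ell μ (1 / p) ≤ p * Z := by
    refine mul_le_mul_of_nonneg_left (ell_mono hnn (by positivity) ?_) hp0.le
    rw [hp, one_div_div, div_le_iff₀ Real.pi_pos]
    nlinarith [Real.pi_gt_three]
  have hpa : p / a ≤ Real.pi / A := by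
    rw [hp, ha, div_div, div_le_div_iff₀ (by positivity) hA0]
    have : A ≤ |w| * (A / x) := by
      rw [mul_div_assoc', le_div_iff₀ hx0]; nlinarith
    exact mul_le_mul_of_nonneg_left this Real.pi_pos.le
  -- `m t = t ℓ(1/t)` is the modulus controlling both `1 - ψ` from below and its increments.
  set m : ℝ → ℝ := fun t => t * ell μ (1 / t) with hm
  have mpos : ∀ t, 0 < t → 0 < m t := fun t ht =>
    mul_pos ht (ell_pos hnn harith (by positivity))
  have mle : ∀ t, 0 < t → m t ≤ 1 := fun t ht => by
    calc t * ell μ (1 / t) ≤ t * (1 / t) :=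
          mul_le_mul_of_nonneg_left (ell_le hnn (by positivity)) ht.le
      _ = 1 := by field_simp
  have inv_low : ∀ t, 0 < t → t ≤ T → ‖(1 - ψ t)⁻¹‖ ≤ 1 / (c * m t) := fun t ht htT => by
    rw [norm_inv, ← one_div]
    exact one_div_le_one_div_of_le (mul_pos hc (mpos t ht)) (hlow t ht htT)
  -- Potter's bound majorises `1 / m²` by a multiple of `t ^ (-3/2)`, which is integrable on `(a, ∞)`.
  set Q : ℝ → ℝ := fun t => Real.sqrt P * a ^ (-(1/2) : ℝ) / Y ^ 2 * t ^ (-(3/2) : ℝ) with hQ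
  have Qpos : ∀ t, 0 < t → 0 ≤ Q t := fun t ht => by positivity
  have mQ : ∀ t, a < t → t ≤ T → 1 / m t ^ 2 ≤ Q t := by
    intro t hat htT
    have ht : 0 < t := ha0.trans hat
    have h4 := hpot (1 / t) (1 / a) (one_div_le_one_div_of_le ht htT)
      (one_div_le_one_div_of_le ha0 hat.le)
    rw [show 1 / a / (1 / t) = t / a by field_simp] at h4
    set l := ell μ (1 / t) with hl
    have hlp : 0 < l := ell_pos hnn harith (by positivity)
    have h5 : Y ^ 2 ≤ Real.sqrt P * Real.sqrt (t / a) * l ^ 2 := by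
      refine (sq_le_sq₀ (by positivity) (by positivity)).1 ?_
      calc (Y ^ 2) ^ 2 = Y ^ 4 := by ring
        _ ≤ P * (t / a) * l ^ 4 := h4
        _ = (Real.sqrt P * Real.sqrt (t / a) * l ^ 2) ^ 2 := by
          rw [mul_pow, mul_pow, Real.sq_sqrt hP.le, Real.sq_sqrt (by positivity)]; ring
    have h6 : a ^ (-(1/2) : ℝ) * t ^ (-(3/2) : ℝ) = Real.sqrt (t / a) / t ^ 2 := by
      rw [Real.sqrt_eq_rpow, Real.div_rpow ht.le ha0.le, Real.rpow_neg ha0.le,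
        show (-(3/2) : ℝ) = 1/2 - 2 by norm_num, Real.rpow_sub ht]
      norm_num
      field_simp
    have h7 : Q t = Real.sqrt P * Real.sqrt (t / a) / (Y ^ 2 * t ^ 2) := by
      calc Q t = Real.sqrt P * (a ^ (-(1/2) : ℝ) * t ^ (-(3/2) : ℝ)) / Y ^ 2 := by
            simp only [hQ]; ring
        _ = _ := by rw [h6]; field_simp
    rw [h7, div_le_div_iff₀ (by have := mpos t ht; positivity) (by positivity)]
    simp only [hm, ← hl, mul_pow]
    have : 0 ≤ t ^ 2 := by positivity
    nlinarith
  set E := p * (1 / c + 2 * M * Z / c ^ 2) with hE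
  have hE0 : 0 ≤ E := by positivity
  have key := osc_half (g := fun t => (k t : ℂ) / (1 - ψ t)) (a := a) (w := w)
    (B := M / (c * m a)) (D := fun t => E * Q t)
    (integrable_quot hk.continuous hkT hψ h1) hw ?_ ?_ ?_
  · -- collect the constants
    have hint : ∫ t in Ioi a, E * Q t = E * (2 * Real.sqrt P / (a * Y ^ 2)) := by
      rw [integral_const_mul]
      congr 1
      simp only [hQ]
      rw [integral_const_mul, integral_Ioi_rpow_of_lt (by norm_num) ha0,
        show (-(3/2) : ℝ) + 1 = -(1/2) by norm_num]
      have : a ^ (-(1/2) : ℝ) * a ^ (-(1/2) : ℝ) = a⁻¹ := by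
        rw [← Real.rpow_add ha0]; norm_num
        exact Real.rpow_neg_one a
      calc _ = 2 * Real.sqrt P * (a ^ (-(1/2) : ℝ) * a ^ (-(1/2) : ℝ)) / Y ^ 2 := by ring
        _ = _ := by rw [this]; field_simp
    rw [hint] at key
    have b1 : E * (2 * Real.sqrt P / (a * Y ^ 2)) ≤
        Real.pi * ((1 / c / l₀ + 2 * M / c ^ 2) * (2 * Real.sqrt P)) * (Z / (A * Y ^ 2)) := by
      have : 1 / c ≤ 1 / c / l₀ * Z := by
        rw [div_mul_eq_mul_div, le_div_iff₀ hl0]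
        exact mul_le_mul_of_nonneg_left hZ (by positivity)
      calc E * (2 * Real.sqrt P / (a * Y ^ 2))
          = (p / a) * (1 / c + 2 * M * Z / c ^ 2) * (2 * Real.sqrt P / Y ^ 2) := by
            rw [hE]; field_simp
        _ ≤ (Real.pi / A) * (1 / c / l₀ * Z + 2 * M * Z / c ^ 2) * (2 * Real.sqrt P / Y ^ 2) := by
            gcongr
        _ = _ := by field_simp
    have b2 : p * (M / (c * m a)) ≤ Real.pi * (M / c) * (Z / (A * Y ^ 2)) := by
      calc p * (M / (c * m a)) = (p / a) * (M / c) * (Y / Y ^ 2) := by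
            simp only [hm, ← hYd]; field_simp
        _ ≤ (Real.pi / A) * (M / c) * (Z / Y ^ 2) := by gcongr
        _ = _ := by field_simp
    have nn : 0 ≤ ‖∫ t in Ioi a, Complex.exp (t * w * Complex.I) * ((k t : ℂ) / (1 - ψ t))‖ :=
      norm_nonneg _
    calc _ ≤ E * (2 * Real.sqrt P / (a * Y ^ 2)) + p * (M / (c * m a)) := by linarith
      _ ≤ _ := by rw [mul_add, add_mul]; exact add_le_add b1 b2
  · intro t hat
    have ht : 0 < t := ha0.trans hat
    rcases le_total T t with h | h
    · rw [hkT t (by rwa [abs_of_pos ht])]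
      have := mpos a ha0
      simp; positivity
    · rw [div_eq_mul_inv, norm_mul, Complex.norm_real, Real.norm_eq_abs, div_eq_mul_one_div M]
      refine mul_le_mul (hkM t) ((inv_low t ht h).trans ?_) (norm_nonneg _) hM
      have := mpos a ha0
      exact one_div_le_one_div_of_le (by positivity)
        (mul_le_mul_of_nonneg_left (mul_ell_inv_mono hnn ha0 hat.le) hc.le)
  · intro t hat
    have ht : 0 < t := ha0.trans hat
    have htp : 0 < t + p := by positivity
    rcases le_total T t with h | h
    · rw [hkT t (by rwa [abs_of_pos ht]), hkT (t + p) (by rw [abs_of_pos htp]; linarith)]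
      simpa using mul_nonneg hE0 (Qpos t ht)
    · have split : (k t : ℂ) / (1 - ψ t) - (k (t + p) : ℂ) / (1 - ψ (t + p)) =
          ((k t - k (t + p) : ℝ) : ℂ) * (1 - ψ t)⁻¹ -
            (k (t + p) : ℂ) * ((ψ (t + p) - ψ t) * ((1 - ψ t)⁻¹ * (1 - ψ (t + p))⁻¹)) := by
        have := h1 t
        have := h1 (t + p)
        push_cast
        field_simp
        ring
      have mt := mpos t ht
      have m1 := mle t ht
      have s1 : ‖((k t - k (t + p) : ℝ) : ℂ) * (1 - ψ t)⁻¹‖ ≤ p * (1 / c) * (1 / m t ^ 2) := by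
        rw [norm_mul, Complex.norm_real]
        have hl := hk.dist_le_mul t (t + p)
        rw [Real.dist_eq, Real.dist_eq] at hl
        have : |t - (t + p)| = p := by rw [show t - (t + p) = -p by ring, abs_neg, abs_of_pos hp0]
        rw [this] at hl
        have h3 : 1 / (c * m t) ≤ 1 / c * (1 / m t ^ 2) := by
          rw [← one_div_mul_one_div]
          refine mul_le_mul_of_nonneg_left (one_div_le_one_div_of_le (by positivity) ?_)
            (by positivity)
          nlinarith
        calc _ ≤ p * (1 / (c * m t)) :=
              mul_le_mul (by simpa using hl) (inv_low t ht h) (norm_nonneg _) hp0.le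
          _ ≤ p * (1 / c * (1 / m t ^ 2)) := mul_le_mul_of_nonneg_left h3 hp0.le
          _ = _ := by ring
      have s2 : ‖(k (t + p) : ℂ) * ((ψ (t + p) - ψ t) * ((1 - ψ t)⁻¹ * (1 - ψ (t + p))⁻¹))‖ ≤
          p * (2 * M * Z / c ^ 2) * (1 / m t ^ 2) := by
        rcases le_total T (t + p) with h2 | h2
        · rw [hkT (t + p) (by rwa [abs_of_pos htp])]
          simp; positivity
        · rw [norm_mul, norm_mul, norm_mul, Complex.norm_real, Real.norm_eq_abs]
          have i1 := inv_low t ht h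
          have i2 : ‖(1 - ψ (t + p))⁻¹‖ ≤ 1 / (c * m t) := by
            refine (inv_low (t + p) htp h2).trans (one_div_le_one_div_of_le (by positivity) ?_)
            exact mul_le_mul_of_nonneg_left (mul_ell_inv_mono hnn ht (by linarith)) hc.le
          have i3 : ‖ψ (t + p) - ψ t‖ ≤ 2 * (p * Z) := (hinc t p hp0).trans (by linarith)
          calc _ ≤ M * (2 * (p * Z) * (1 / (c * m t) * (1 / (c * m t)))) := by
                gcongr
                exact hkM _
            _ = _ := by field_simp
      rw [split]
      calc _ ≤ p * (1 / c) * (1 / m t ^ 2) + p * (2 * M * Z / c ^ 2) * (1 / m t ^ 2) :=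
            (norm_sub_le _ _).trans (add_le_add s1 s2)
        _ = E * (1 / m t ^ 2) := by rw [hE]; ring
        _ ≤ E * Q t := mul_le_mul_of_nonneg_left (mQ t hat h) hE0
  · exact ((integrableOn_Ioi_rpow_of_lt (by norm_num) ha0).const_mul _).const_mul _

end Renew

namespace Renew

/-! ### Increments of the damped Fourier integral -/

variable {μ : Measure ℝ}

/-- The inverse Fourier integral `∫ k(t) e^{-itx} / (1 - r φ(t)) dt`, with `φ` the characteristic
function of `μ`. -/
noncomputable def J (μ : Measure ℝ) (k : ℝ → ℝ) (r x : ℝ) : ℂ :=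
  ∫ t : ℝ, Complex.exp (t * (-x : ℝ) * Complex.I) * ((k t : ℂ) / (1 - r * charFun μ t))

lemma norm_exp_mul_I (t w : ℝ) : ‖Complex.exp (t * w * Complex.I)‖ = 1 := by
  rw [← Complex.ofReal_mul, Complex.norm_exp_ofReal_mul_I]

lemma norm_exp_sub_le (s u : ℝ) :
    ‖Complex.exp (s * Complex.I) - Complex.exp (u * Complex.I)‖ ≤ |s - u| := by
  have : Complex.exp (s * Complex.I) - Complex.exp (u * Complex.I) =
      Complex.exp (u * Complex.I) * (Complex.exp (Complex.I * (s - u : ℝ)) - 1) := by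
    rw [mul_sub, ← Complex.exp_add, mul_one]
    congr 2
    push_cast; ring
  rw [this, norm_mul, Complex.norm_exp_ofReal_mul_I, one_mul]
  exact Real.norm_exp_I_mul_ofReal_sub_one_le

lemma integrable_exp_mul {f : ℝ → ℂ} (hf : Integrable f) (w : ℝ) :
    Integrable (fun t : ℝ => Complex.exp (t * w * Complex.I) * f t) := by
  refine hf.norm.mono' (AEStronglyMeasurable.mul (by fun_prop) hf.aestronglyMeasurable)
    (ae_of_all _ fun t => ?_)
  rw [norm_mul, norm_exp_mul_I, one_mul]

variable [IsProbabilityMeasure μ]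

lemma one_sub_mul_charFun_ne {r : ℝ} (h0 : 0 ≤ r) (h1 : r < 1) (t : ℝ) :
    1 - (r : ℂ) * charFun μ t ≠ 0 := by
  intro h
  have h2 : (1 : ℂ) = r * charFun μ t := sub_eq_zero.1 h
  have h3 : ‖(r : ℂ) * charFun μ t‖ ≤ r := by
    rw [norm_mul, Complex.norm_real, Real.norm_eq_abs, abs_of_nonneg h0]
    exact mul_le_of_le_one_right h0 (norm_charFun_le_one t)
  rw [← h2] at h3
  norm_num at h3
  linarith

/-- The splitting `|t| ≤ A/x`, `|t| > A/x`: near the origin the phase difference is at most `d|t|`,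
which cancels the pole of `1/(1 - rφ)`; away from it the integral is oscillatory. -/
lemma main_diff (hnn : ∀ᵐ y ∂μ, 0 ≤ y) (harith : ¬ IsArith μ) (hsv : SlowlyVarying (ell μ))
    {T M : ℝ} (hT : 0 < T) (hM : 0 ≤ M) {k : ℝ → ℝ} (hk : LipschitzWith 1 k)
    (hkT : ∀ t, T ≤ |t| → k t = 0) (hkM : ∀ t, |k t| ≤ M) :
    ∃ C > 0, ∀ A ε x d r, 1 ≤ A → 0 ≤ ε → ε ≤ 1 → A / T ≤ x → 0 ≤ d → d ≤ ε * x →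
      0 ≤ r → r < 1 →
      ‖J μ k r x - J μ k r (x + d)‖ ≤
        C * (A * ε / ell μ (x / A) + ell μ (2 * x) / (A * ell μ (x / A) ^ 2)) := by
  obtain ⟨c₀, hc₀, hlow⟩ := charFun_lower hnn harith hsv T
  obtain ⟨C, hC, hosc⟩ := osc_bound hnn harith hsv hT hM (half_pos hc₀)
  refine ⟨max (2 * M / (c₀ / 2)) (4 * C), lt_max_of_lt_right (by positivity), ?_⟩
  intro A ε x d r hA hε0 hε1 hx hd0 hd hr0 hr1
  have hA0 : 0 < A := by linarith
  have hx0 : 0 < x := lt_of_lt_of_le (by positivity) hx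
  have hne := one_sub_mul_charFun_ne (μ := μ) hr0 hr1
  have hcont : Continuous (fun t => (r : ℂ) * charFun μ t) := continuous_const.mul continuous_charFun
  have hlo : ∀ t, t ≠ 0 → |t| ≤ T →
      c₀ / 2 * (|t| * ell μ (1 / |t|)) ≤ ‖1 - (r : ℂ) * charFun μ t‖ := fun t ht htT => by
    have h1 := hlow t ht htT
    have h2 := norm_damped (norm_charFun_le_one (μ := μ) t) hr0 hr1.le
    linarith
  have hinc : ∀ s t : ℝ, s ≠ t → ‖(r : ℂ) * charFun μ s - r * charFun μ t‖ ≤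
      2 * (|s - t| * ell μ (1 / |s - t|)) := fun s t hst => by
    rw [← mul_sub, norm_mul, Complex.norm_real, Real.norm_eq_abs, abs_of_nonneg hr0]
    exact (mul_le_of_le_one_left (norm_nonneg _) hr1.le).trans (norm_charFun_sub hnn hst)
  have hint := integrable_quot hk.continuous hkT hcont hne
  set q : ℝ → ℂ := fun t => (k t : ℂ) / (1 - r * charFun μ t) with hq
  set a := A / x with ha
  have ha0 : 0 < a := by positivity
  have haT : a ≤ T := by
    rw [ha, div_le_iff₀ hx0]; rw [div_le_iff₀ hT] at hx; linarith
  have hxa : x / A = 1 / a := by rw [ha]; field_simp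
  set R := ell μ (2 * x) / (A * ell μ (x / A) ^ 2) with hR
  have hY : 0 < ell μ (x / A) := ell_pos hnn harith (by positivity)
  -- the two tails
  have right : ∀ w, x ≤ |w| → |w| ≤ 2 * x →
      ‖∫ t in Ioi a, Complex.exp (t * w * Complex.I) * q t‖ ≤ C * R := fun w h1 h2 => by
    refine hosc k (fun t => (r : ℂ) * charFun μ t) hk hkT hkM hcont hne ?_ ?_ A x w hA hx h1 h2
    · intro t ht htT
      have := hlo t ht.ne' (by rwa [abs_of_pos ht])
      rwa [abs_of_pos ht] at this
    · intro t p hp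
      have := hinc (t + p) t (by linarith)
      rwa [show t + p - t = p by ring, abs_of_pos hp] at this
  have left : ∀ w, x ≤ |w| → |w| ≤ 2 * x →
      ‖∫ t in Iic (-a), Complex.exp (t * w * Complex.I) * q t‖ ≤ C * R := fun w h1 h2 => by
    rw [← integral_comp_neg_Ioi]
    have := hosc (fun t => k (-t)) (fun t => (r : ℂ) * charFun μ (-t))
      (by have := hk.comp (LipschitzWith.id (α := ℝ)).neg; rw [mul_one] at this; exact this) (fun t ht => hkT _ (by rwa [abs_neg]))
      (fun t => hkM _) (hcont.comp continuous_neg) (fun t => hne _) ?_ ?_ A x (-w) hA hx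
      (by rwa [abs_neg]) (by rwa [abs_neg])
    · refine le_trans (le_of_eq ?_) this
      congr 1
      refine setIntegral_congr_fun measurableSet_Ioi fun t _ => ?_
      simp [hq]
    · intro t ht htT
      have := hlo (-t) (by linarith) (by rwa [abs_neg, abs_of_pos ht])
      rwa [abs_neg, abs_of_pos ht] at this
    · intro t p hp
      have := hinc (-(t + p)) (-t) (by linarith)
      rwa [show -(t + p) - -t = -p by ring, abs_neg, abs_of_pos hp] at this
  have split : ∀ f : ℝ → ℂ, Integrable f →
      ∫ t, f t = (∫ t in Iic (-a), f t) + (∫ t in Ioc (-a) a, f t) + ∫ t in Ioi a, f t := by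
    intro f hf
    rw [← setIntegral_union (Iic_disjoint_Ioc le_rfl) measurableSet_Ioc hf.integrableOn
      hf.integrableOn, Iic_union_Ioc_eq_Iic (by linarith),
      ← intervalIntegral.integral_Iic_add_Ioi hf.integrableOn hf.integrableOn]
  have mid : ‖∫ t in Ioc (-a) a, (Complex.exp (t * (-x : ℝ) * Complex.I) * q t -
      Complex.exp (t * (-(x + d) : ℝ) * Complex.I) * q t)‖ ≤
        2 * M / (c₀ / 2) * (A * ε / ell μ (x / A)) := by
    have := norm_setIntegral_le_of_norm_le_const (μ := volume) (s := Ioc (-a) a)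
      (C := d * M / (c₀ / 2 * ell μ (x / A)))
      (f := fun t : ℝ => Complex.exp (t * (-x : ℝ) * Complex.I) * q t -
        Complex.exp (t * (-(x + d) : ℝ) * Complex.I) * q t) (by simp) (fun t ht => by
        rcases eq_or_ne t 0 with h | h
        · rw [h]; simp; positivity
        have hta : |t| ≤ a := abs_le.2 ⟨ht.1.le, ht.2⟩
        have h0 : 0 < |t| := abs_pos.2 h
        have hell : ell μ (x / A) ≤ ell μ (1 / |t|) := by
          rw [hxa]
          exact ell_mono hnn (by positivity) (one_div_le_one_div_of_le h0 hta)
        have e1 : ‖Complex.exp (t * (-x : ℝ) * Complex.I) -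
            Complex.exp (t * (-(x + d) : ℝ) * Complex.I)‖ ≤ d * |t| := by
          have := norm_exp_sub_le (t * -x) (t * -(x + d))
          rw [show t * -x - t * -(x + d) = d * t by ring, abs_mul, abs_of_nonneg hd0] at this
          push_cast at this ⊢
          exact this
        have e2 : ‖q t‖ ≤ M / (c₀ / 2 * (|t| * ell μ (x / A))) := by
          rw [hq, norm_div, Complex.norm_real, Real.norm_eq_abs]
          refine div_le_div₀ hM (hkM t) (by positivity) (le_trans ?_ (hlo t h (hta.trans haT)))
          gcongr
        rw [← sub_mul, norm_mul]
        calc _ ≤ d * |t| * (M / (c₀ / 2 * (|t| * ell μ (x / A)))) :=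
              mul_le_mul e1 e2 (norm_nonneg _) (by positivity)
          _ = _ := by field_simp)
    refine this.trans ?_
    rw [Real.volume_real_Ioc_of_le (by linarith)]
    have hda : d * a ≤ A * ε := by
      rw [ha, mul_div_assoc', div_le_iff₀ hx0]; nlinarith
    calc _ = 2 * M / (c₀ / 2) * (d * a / ell μ (x / A)) := by field_simp; ring
      _ ≤ _ := by gcongr
  have hJ : J μ k r x - J μ k r (x + d) =
      ((∫ t in Iic (-a), Complex.exp (t * (-x : ℝ) * Complex.I) * q t) -
        ∫ t in Iic (-a), Complex.exp (t * (-(x + d) : ℝ) * Complex.I) * q t) +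
      (∫ t in Ioc (-a) a, (Complex.exp (t * (-x : ℝ) * Complex.I) * q t -
        Complex.exp (t * (-(x + d) : ℝ) * Complex.I) * q t)) +
      ((∫ t in Ioi a, Complex.exp (t * (-x : ℝ) * Complex.I) * q t) -
        ∫ t in Ioi a, Complex.exp (t * (-(x + d) : ℝ) * Complex.I) * q t) := by
    have i1 := integrable_exp_mul hint (-x)
    have i2 := integrable_exp_mul hint (-(x + d))
    rw [integral_sub i1.integrableOn i2.integrableOn, J, J, split _ i1, split _ i2]
    ring
  have x1 : x ≤ |(-x)| := by rw [abs_neg, abs_of_pos hx0]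
  have x2 : |(-x)| ≤ 2 * x := by rw [abs_neg, abs_of_pos hx0]; linarith
  have x3 : x ≤ |(-(x + d))| := by rw [abs_neg, abs_of_pos (by linarith)]; linarith
  have x4 : |(-(x + d))| ≤ 2 * x := by rw [abs_neg, abs_of_pos (by linarith)]; nlinarith
  rw [hJ]
  have hR0 : 0 ≤ R := by
    have := ell_nonneg hnn (show 0 ≤ 2 * x by positivity)
    positivity
  have hE0 : 0 ≤ A * ε / ell μ (x / A) := by positivity
  have n1 := norm_add₃_le (a := (∫ t in Iic (-a), Complex.exp (t * (-x : ℝ) * Complex.I) * q t) -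
        ∫ t in Iic (-a), Complex.exp (t * (-(x + d) : ℝ) * Complex.I) * q t)
      (b := ∫ t in Ioc (-a) a, (Complex.exp (t * (-x : ℝ) * Complex.I) * q t -
        Complex.exp (t * (-(x + d) : ℝ) * Complex.I) * q t))
      (c := (∫ t in Ioi a, Complex.exp (t * (-x : ℝ) * Complex.I) * q t) -
        ∫ t in Ioi a, Complex.exp (t * (-(x + d) : ℝ) * Complex.I) * q t)
  have n2 := (norm_sub_le _ _).trans (add_le_add (left _ x1 x2) (left _ x3 x4))
  have n3 := (norm_sub_le _ _).trans (add_le_add (right _ x1 x2) (right _ x3 x4))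
  have m1 := mul_le_mul_of_nonneg_right (le_max_left (2 * M / (c₀ / 2)) (4 * C)) hE0
  have m2 := mul_le_mul_of_nonneg_right (le_max_right (2 * M / (c₀ / 2)) (4 * C)) hR0
  rw [mul_add]
  linarith

end Renew

namespace Renew

/-! ### Kernels integrated against the renewal measure -/

/-- The Fourier transform `∫ k(t) e^{itv} dt`. -/
noncomputable def Kf (k : ℝ → ℝ) (v : ℝ) : ℂ :=
  ∫ t : ℝ, Complex.exp (t * v * Complex.I) * (k t : ℂ)

lemma continuous_Kf {k : ℝ → ℝ} (hk : Integrable k) : Continuous (Kf k) := by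
  refine continuous_of_dominated (bound := fun t => ‖k t‖) ?_ ?_ hk.norm ?_
  · intro v
    exact (integrable_exp_mul hk.ofReal v).aestronglyMeasurable
  · intro v
    refine ae_of_all _ fun t => ?_
    rw [norm_mul, norm_exp_mul_I, one_mul, Complex.norm_real]
  · exact ae_of_all _ fun t => by fun_prop

variable {μ : Measure ℝ} [IsProbabilityMeasure μ]

/-- Writing `y⁻² = ∫_y^∞ 2 s⁻³ ds` reduces the tail of `∫ y⁻² dU` to the bound on `U[0, s]`. -/
lemma far_lint (hnn : ∀ᵐ y ∂μ, 0 ≤ y) (harith : ¬ IsArith μ) {b : ℝ} (hb : 0 < b) :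
    ∫⁻ y in Ioi b, ENNReal.ofReal (1 / y ^ 2) ∂(Um μ) ≤ ENNReal.ofReal (4 / (b * ell μ b)) := by
  have hl := ell_pos hnn harith hb
  have e1 : ∀ y ∈ Ioi b, ENNReal.ofReal (1 / y ^ 2) =
      ∫⁻ s in Ioi b, (Ioi y).indicator (fun s => ENNReal.ofReal (2 * s ^ (-3 : ℝ))) s := by
    intro y hy
    have hy0 : 0 < y := hb.trans hy
    rw [lintegral_indicator measurableSet_Ioi, Measure.restrict_restrict measurableSet_Ioi,
      inter_eq_left.2 (Ioi_subset_Ioi (le_of_lt hy)), ← ofReal_integral_eq_lintegral_ofReal]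
    · rw [integral_const_mul, integral_Ioi_rpow_of_lt (by norm_num) hy0]
      congr 1
      rw [show (-3 : ℝ) + 1 = -(2:ℕ) by norm_num, Real.rpow_neg hy0.le, Real.rpow_natCast]
      field_simp
      norm_num
    · exact (integrableOn_Ioi_rpow_of_lt (by norm_num) hy0).const_mul _
    · filter_upwards [ae_restrict_mem measurableSet_Ioi] with s hs
      have : 0 < s := hy0.trans hs
      positivity
  rw [setLIntegral_congr_fun measurableSet_Ioi e1, lintegral_lintegral_swap]
  swap
  · have : Measurable (fun p : ℝ × ℝ => {p : ℝ × ℝ | p.1 < p.2}.indicator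
        (fun p => ENNReal.ofReal (2 * p.2 ^ (-3 : ℝ))) p) := by
      refine Measurable.indicator (by fun_prop) (measurableSet_lt measurable_fst measurable_snd)
    exact this.aemeasurable
  have e2 : ∀ s ∈ Ioi b, ∫⁻ y in Ioi b,
      (Ioi y).indicator (fun s => ENNReal.ofReal (2 * s ^ (-3 : ℝ))) s ∂(Um μ) ≤
        ENNReal.ofReal (4 / ell μ b * s ^ (-2 : ℝ)) := by
    intro s hs
    have hs0 : 0 < s := hb.trans hs
    have hls := ell_pos hnn harith hs0
    calc _ ≤ ∫⁻ y, (Iic s).indicator (fun _ => ENNReal.ofReal (2 * s ^ (-3 : ℝ))) y ∂(Um μ) := by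
          refine (setLIntegral_le_lintegral _ _).trans (lintegral_mono fun y => ?_)
          by_cases h : y < s
          · rw [indicator_of_mem (show s ∈ Ioi y from h),
              indicator_of_mem (show y ∈ Iic s from h.le)]
          · rw [indicator_of_notMem (show s ∉ Ioi y from h)]; exact zero_le
      _ = ENNReal.ofReal (2 * s ^ (-3 : ℝ) * (Um μ).real (Iic s)) := by
          rw [lintegral_indicator_const measurableSet_Iic,
            ENNReal.ofReal_mul (p := 2 * s ^ (-3 : ℝ)) (by positivity), Measure.real, ENNReal.ofReal_toReal (Um_lt_top hnn harith s).ne]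
      _ ≤ _ := by
          refine ENNReal.ofReal_le_ofReal ?_
          have h1 := U_upper hnn harith hs0.le hs0
          have h2 : (Um μ).real (Iic s) ≤ 2 * s / ell μ s := by
            rw [le_div_iff₀ hls]; linarith
          have h3 : s ^ (-3 : ℝ) * s = s ^ (-2 : ℝ) := by
            nth_rewrite 2 [← Real.rpow_one s]
            rw [← Real.rpow_add hs0]; norm_num
          calc 2 * s ^ (-3 : ℝ) * (Um μ).real (Iic s)
              ≤ 2 * s ^ (-3 : ℝ) * (2 * s / ell μ s) := by gcongr
            _ = 4 / ell μ s * (s ^ (-3 : ℝ) * s) := by ring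
            _ ≤ 4 / ell μ b * (s ^ (-3 : ℝ) * s) := by
                gcongr
                exact ell_mono hnn hb.le (le_of_lt hs)
            _ = _ := by rw [h3]
  refine (setLIntegral_mono' measurableSet_Ioi e2).trans (le_of_eq ?_)
  rw [← ofReal_integral_eq_lintegral_ofReal]
  · rw [integral_const_mul, integral_Ioi_rpow_of_lt (by norm_num) hb]
    congr 1
    rw [show (-2 : ℝ) + 1 = -1 by norm_num, Real.rpow_neg_one]
    field_simp
  · exact (integrableOn_Ioi_rpow_of_lt (by norm_num) hb).const_mul _
  · filter_upwards [ae_restrict_mem measurableSet_Ioi] with s hs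
    have : 0 < s := hb.trans hs
    positivity

lemma far_integrable (hnn : ∀ᵐ y ∂μ, 0 ≤ y) (harith : ¬ IsArith μ) {b : ℝ} (hb : 0 < b) :
    IntegrableOn (fun y => 1 / y ^ 2) (Ioi b) (Um μ) := by
  refine ⟨(Measurable.aestronglyMeasurable (by fun_prop)), ?_⟩
  rw [hasFiniteIntegral_iff_ofReal (ae_of_all _ fun y => by positivity)]
  exact (far_lint hnn harith hb).trans_lt ENNReal.ofReal_lt_top

lemma far_le (hnn : ∀ᵐ y ∂μ, 0 ≤ y) (harith : ¬ IsArith μ) {b : ℝ} (hb : 0 < b) :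
    ∫ y in Ioi b, 1 / y ^ 2 ∂(Um μ) ≤ 4 / (b * ell μ b) := by
  have hl := ell_pos hnn harith hb
  rw [integral_eq_lintegral_of_nonneg_ae (ae_of_all _ fun y => by positivity)
    (Measurable.aestronglyMeasurable (by fun_prop))]
  exact ENNReal.toReal_le_of_le_ofReal (by positivity) (far_lint hnn harith hb)

lemma integrable_cauchy (hnn : ∀ᵐ y ∂μ, 0 ≤ y) (harith : ¬ IsArith μ) (x : ℝ) :
    Integrable (fun y => 1 / (1 + (y - x) ^ 2)) (Um μ) := by
  have h0 : Integrable (fun y : ℝ => 1 / (1 + y ^ 2)) (Um μ) := by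
    rw [← integrableOn_univ, ← Iic_union_Ioi (a := (1:ℝ))]
    refine IntegrableOn.union ?_ ?_
    · refine Measure.integrableOn_of_bounded (M := 1) (Um_lt_top hnn harith 1).ne
        (Measurable.aestronglyMeasurable (by fun_prop)) (ae_of_all _ fun y => ?_)
      rw [Real.norm_eq_abs, abs_of_pos (by positivity), div_le_one (by positivity)]
      nlinarith [sq_nonneg y]
    · refine (far_integrable hnn harith one_pos).mono'
        (Measurable.aestronglyMeasurable (by fun_prop)) ?_
      filter_upwards [ae_restrict_mem measurableSet_Ioi] with y hy
      have : 0 < y := one_pos.trans hy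
      rw [Real.norm_eq_abs, abs_of_pos (by positivity)]
      exact one_div_le_one_div_of_le (by positivity) (by linarith)
  refine (h0.const_mul (2 * (1 + x ^ 2))).mono'
    (Measurable.aestronglyMeasurable (by fun_prop)) (ae_of_all _ fun y => ?_)
  rw [Real.norm_eq_abs, abs_of_pos (by positivity), mul_one_div,
    div_le_div_iff₀ (by positivity) (by positivity)]
  nlinarith [sq_nonneg (y - 2 * x), sq_nonneg (x * (y - x)), sq_nonneg (y - x)]

lemma integrable_Kf (hnn : ∀ᵐ y ∂μ, 0 ≤ y) (harith : ¬ IsArith μ) {k : ℝ → ℝ} {B : ℝ}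
    (hk : Integrable k) (hB : ∀ v, ‖Kf k v‖ ≤ B / (1 + v ^ 2)) (x : ℝ) :
    Integrable (fun y => Kf k (y - x)) (Um μ) := by
  refine ((integrable_cauchy hnn harith x).const_mul B).mono' ?_ (ae_of_all _ fun y => ?_)
  · exact ((continuous_Kf hk).comp (continuous_id.sub continuous_const)).aestronglyMeasurable
  · rw [mul_one_div]; exact hB _

lemma integral_Kf_convPow {k : ℝ → ℝ} (hk : Integrable k) (x : ℝ) (n : ℕ) :
    ∫ y, Kf k (y - x) ∂(convPow μ n) =
      ∫ t : ℝ, Complex.exp (t * (-x : ℝ) * Complex.I) * (k t * charFun μ t ^ n) := by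
  simp only [Kf]
  rw [integral_integral_swap]
  · congr 1
    ext t
    rw [← charFun_convPow, charFun_apply_real, mul_left_comm, ← integral_const_mul,
      ← integral_const_mul]
    congr 1
    ext y
    have : Complex.exp (t * (y - x : ℝ) * Complex.I) =
        Complex.exp (t * (-x : ℝ) * Complex.I) * Complex.exp (t * y * Complex.I) := by
      rw [← Complex.exp_add]; congr 1; push_cast; ring
    rw [this]; ring
  · refine (hk.norm.comp_snd (convPow μ n)).mono' ?_ (ae_of_all _ fun p => ?_)
    · exact AEStronglyMeasurable.mul (Continuous.aestronglyMeasurable (by fun_prop))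
        ((hk.ofReal (𝕜 := ℂ)).comp_snd (convPow μ n)).aestronglyMeasurable
    · simp only [Function.uncurry]
      rw [norm_mul, norm_exp_mul_I, one_mul, Complex.norm_real]

/-- The geometric series for `1/(1 - rφ)` turns the damped Fourier integral into the integral of the
kernel against the damped renewal measure `Σ rⁿ μ^{*n}`. -/
lemma hasSum_J {k : ℝ → ℝ} (hk : Integrable k) (x : ℝ) {r : ℝ} (h0 : 0 ≤ r) (h1 : r < 1) :
    HasSum (fun n => (r : ℂ) ^ n * ∫ y, Kf k (y - x) ∂(convPow μ n)) (J μ k r x) := by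
  have hn : ∀ t, ‖(r : ℂ) * charFun μ t‖ ≤ r := fun t => by
    rw [norm_mul, Complex.norm_real, Real.norm_eq_abs, abs_of_nonneg h0]
    exact mul_le_of_le_one_right h0 (norm_charFun_le_one t)
  have e : ∀ n, (r : ℂ) ^ n * ∫ y, Kf k (y - x) ∂(convPow μ n) =
      ∫ t : ℝ, Complex.exp (t * (-x : ℝ) * Complex.I) * (k t * (r * charFun μ t) ^ n) := by
    intro n
    rw [integral_Kf_convPow hk, ← integral_const_mul]
    congr 1
    ext t
    ring
  simp only [e]
  refine hasSum_integral_of_dominated_convergence (fun n t => ‖k t‖ * r ^ n) ?_ ?_ ?_ ?_ ?_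
  · intro n
    refine AEStronglyMeasurable.mul (by fun_prop) (AEStronglyMeasurable.mul
      (hk.ofReal (𝕜 := ℂ)).aestronglyMeasurable (Continuous.aestronglyMeasurable ?_))
    exact (continuous_const.mul continuous_charFun).pow n
  · intro n
    refine ae_of_all _ fun t => ?_
    rw [norm_mul, norm_exp_mul_I, one_mul, norm_mul, Complex.norm_real, norm_pow]
    gcongr
    exact hn t
  · exact ae_of_all _ fun t => (summable_geometric_of_lt_one h0 h1).mul_left _
  · simp only [tsum_mul_left]
    exact hk.norm.mul_const _
  · refine ae_of_all _ fun t => ?_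
    have := (hasSum_geometric_of_norm_lt_one ((hn t).trans_lt h1)).mul_left
      (Complex.exp (t * (-x : ℝ) * Complex.I) * k t)
    simp only [mul_assoc] at this
    rw [div_eq_mul_inv]
    simpa only [mul_assoc] using this

/-- Letting the damping `r ↑ 1` recovers the integral of the kernel against `U`. -/
lemma tendsto_J (hnn : ∀ᵐ y ∂μ, 0 ≤ y) (harith : ¬ IsArith μ) {k : ℝ → ℝ} {B : ℝ}
    (hk : Integrable k) (hB : ∀ v, ‖Kf k v‖ ≤ B / (1 + v ^ 2)) (x : ℝ) :
    Tendsto (fun r => J μ k r x) (𝓝[<] 1) (𝓝 (∫ y, Kf k (y - x) ∂(Um μ))) := by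
  have hs := hasSum_integral_measure (integrable_Kf hnn harith hk hB x)
  rw [← Um] at hs
  rw [← hs.tsum_eq]
  have hev : ∀ᶠ r : ℝ in 𝓝[<] 1, 0 ≤ r ∧ r < 1 := by
    filter_upwards [Ioo_mem_nhdsLT (show (0:ℝ) < 1 by norm_num)] with r hr
    exact ⟨hr.1.le, hr.2⟩
  have : Tendsto (fun r : ℝ => ∑' n, (r : ℂ) ^ n * ∫ y, Kf k (y - x) ∂(convPow μ n)) (𝓝[<] 1)
      (𝓝 (∑' n, ∫ y, Kf k (y - x) ∂(convPow μ n))) := by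
    refine tendsto_tsum_of_dominated_convergence hs.summable.norm ?_ ?_
    · intro n
      have h : Continuous (fun r : ℝ => (r : ℂ) ^ n * ∫ y, Kf k (y - x) ∂(convPow μ n)) := by
        fun_prop
      have h2 := h.tendsto 1
      simp only [Complex.ofReal_one, one_pow, one_mul] at h2
      exact h2.mono_left nhdsWithin_le_nhds
    · filter_upwards [hev] with r hr n
      rw [norm_mul, norm_pow, Complex.norm_real, Real.norm_eq_abs, abs_of_nonneg hr.1]
      exact mul_le_of_le_one_left (norm_nonneg _) (pow_le_one₀ hr.1 hr.2.le)
  refine this.congr' ?_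
  filter_upwards [hev] with r hr
  exact (hasSum_J hk x hr.1 hr.2).tsum_eq

lemma integrable_of_support {k : ℝ → ℝ} {T : ℝ} (hk : Continuous k)
    (hkT : ∀ t, T ≤ |t| → k t = 0) : Integrable k := by
  refine hk.integrable_of_hasCompactSupport
    (HasCompactSupport.of_support_subset_isCompact (isCompact_Icc (a := -T) (b := T)) ?_)
  intro t ht
  rw [mem_Icc, ← abs_le]
  by_contra h
  exact ht (hkT t (not_le.1 h).le)

/-- `main_diff` with the damping removed: over a shift `d ≤ εx` the integral of the kernel against
`U` changes by little compared with `1/ℓ(x)`, if `A` is large and `Aε` small. -/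
lemma I_diff (hnn : ∀ᵐ y ∂μ, 0 ≤ y) (harith : ¬ IsArith μ) (hsv : SlowlyVarying (ell μ))
    {T M B : ℝ} (hT : 0 < T) (hM : 0 ≤ M) {k : ℝ → ℝ} (hk : LipschitzWith 1 k)
    (hkT : ∀ t, T ≤ |t| → k t = 0) (hkM : ∀ t, |k t| ≤ M)
    (hB : ∀ v, ‖Kf k v‖ ≤ B / (1 + v ^ 2)) :
    ∃ C > 0, ∀ A ε x d, 1 ≤ A → 0 ≤ ε → ε ≤ 1 → A / T ≤ x → 0 ≤ d → d ≤ ε * x →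
      ‖(∫ y, Kf k (y - x) ∂(Um μ)) - ∫ y, Kf k (y - (x + d)) ∂(Um μ)‖ ≤
        C * (A * ε / ell μ (x / A) + ell μ (2 * x) / (A * ell μ (x / A) ^ 2)) := by
  obtain ⟨C, hC, h⟩ := main_diff hnn harith hsv hT hM hk hkT hkM
  refine ⟨C, hC, fun A ε x d hA h0 h1 hx hd0 hd => ?_⟩
  have hki := integrable_of_support hk.continuous hkT
  refine le_of_tendsto ((tendsto_J hnn harith hki hB x).sub
    (tendsto_J hnn harith hki hB (x + d))).norm ?_
  filter_upwards [Ioo_mem_nhdsLT (show (0:ℝ) < 1 by norm_num)] with r hr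
  exact h A ε x d r hA h0 h1 hx hd0 hd hr.1.le hr.2

end Renew

namespace Renew

/-! ### Averaging -/

section Kernel

variable {K : ℝ → ℂ} {B : ℝ}

lemma kernel_integrable (hK : Continuous K) (hB : ∀ v, ‖K v‖ ≤ B / (1 + v ^ 2)) :
    Integrable K := by
  refine (integrable_inv_one_add_sq.const_mul B).mono' hK.aestronglyMeasurable
    (ae_of_all _ fun v => ?_)
  rw [← div_eq_mul_inv]; exact hB v

lemma kernel_norm_le (hK : Continuous K) (hB : ∀ v, ‖K v‖ ≤ B / (1 + v ^ 2)) (s : Set ℝ) :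
    ‖∫ v in s, K v‖ ≤ B * Real.pi := by
  have hi := kernel_integrable hK hB
  calc ‖∫ v in s, K v‖ ≤ ∫ v in s, ‖K v‖ := norm_integral_le_integral_norm _
    _ ≤ ∫ v, ‖K v‖ := setIntegral_le_integral hi.norm (ae_of_all _ fun v => norm_nonneg _)
    _ ≤ ∫ v, B * (1 + v ^ 2)⁻¹ := by
        refine integral_mono hi.norm (integrable_inv_one_add_sq.const_mul B) fun v => ?_
        simpa only [div_eq_mul_inv] using hB v
    _ = _ := by rw [integral_const_mul, integral_univ_inv_one_add_sq]

lemma kernel_tail (hB : ∀ v, ‖K v‖ ≤ B / (1 + v ^ 2)) {s : ℝ} (hs : 0 < s) :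
    ‖∫ v in Ioi s, K v‖ ≤ B / s := by
  have hB0 : 0 ≤ B := by have := (norm_nonneg _).trans (hB 0); simpa using this
  have hi := integrableOn_Ioi_rpow_of_lt (a := -2) (by norm_num) hs
  calc ‖∫ v in Ioi s, K v‖ ≤ ∫ v in Ioi s, B * v ^ (-2 : ℝ) := by
        refine norm_integral_le_of_norm_le (hi.const_mul B) ?_
        filter_upwards [ae_restrict_mem measurableSet_Ioi] with v hv
        have hv0 : 0 < v := hs.trans hv
        refine (hB v).trans ?_
        rw [show (-2 : ℝ) = -(2:ℕ) by norm_num, Real.rpow_neg hv0.le, Real.rpow_natCast,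
          ← div_eq_mul_inv]
        exact div_le_div_of_nonneg_left hB0 (by positivity) (by linarith)
    _ = B / s := by
        rw [integral_const_mul, integral_Ioi_rpow_of_lt (by norm_num) hs,
          show (-2 : ℝ) + 1 = -1 by norm_num, Real.rpow_neg_one]
        field_simp

/-- The defect of the primitive of `K` from the step function `κ 1_{(0, ∞)}`, `κ = ∫ K`. -/
noncomputable def defect (K : ℝ → ℂ) (s : ℝ) : ℂ :=
  (∫ v in Iic s, K v) - (Ioi (0:ℝ)).indicator (fun _ => ∫ v, K v) s

lemma defect_of_pos (hK : Continuous K) (hB : ∀ v, ‖K v‖ ≤ B / (1 + v ^ 2)) {s : ℝ} (hs : 0 < s) :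
    defect K s = -∫ v in Ioi s, K v := by
  have hi := kernel_integrable hK hB
  rw [defect, indicator_of_mem (show s ∈ Ioi (0:ℝ) from hs),
    ← intervalIntegral.integral_Iic_add_Ioi (b := s) hi.integrableOn hi.integrableOn]
  ring

lemma defect_of_nonpos {s : ℝ} (hs : s ≤ 0) : defect K s = ∫ v in Iic s, K v := by
  rw [defect, indicator_of_notMem (show s ∉ Ioi (0:ℝ) from not_lt.2 hs), sub_zero]

lemma defect_le (hK : Continuous K) (hB : ∀ v, ‖K v‖ ≤ B / (1 + v ^ 2)) (s : ℝ) :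
    ‖defect K s‖ ≤ B * Real.pi := by
  rcases le_or_gt s 0 with h | h
  · rw [defect_of_nonpos h]; exact kernel_norm_le hK hB _
  · rw [defect_of_pos hK hB h, norm_neg]; exact kernel_norm_le hK hB _

lemma defect_le_far (hK : Continuous K) (hB : ∀ v, ‖K v‖ ≤ B / (1 + v ^ 2)) {s η : ℝ}
    (hη : 0 < η) (hs : η ≤ |s|) : ‖defect K s‖ ≤ B / η := by
  have hB0 : 0 ≤ B := by have := (norm_nonneg _).trans (hB 0); simpa using this
  have hmono : B / |s| ≤ B / η := div_le_div_of_nonneg_left hB0 hη hs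
  rcases le_or_gt s 0 with h | h
  · have hs0 : 0 < -s := by rw [abs_of_nonpos h] at hs; linarith
    rw [abs_of_nonpos h] at hmono
    rw [defect_of_nonpos h]
    have := kernel_tail (K := fun v => K (-v)) (B := B)
      (fun v => by simpa using hB (-v)) hs0
    rw [integral_comp_neg_Ioi, neg_neg] at this
    exact this.trans hmono
  · rw [abs_of_pos h] at hmono
    rw [defect_of_pos hK hB h, norm_neg]; exact (kernel_tail hB h).trans hmono

/-- The average over a window is the step function of the window up to two defects. -/
lemma window_eq (hK : Continuous K) (hB : ∀ v, ‖K v‖ ≤ B / (1 + v ^ 2)) (x y : ℝ) {L : ℝ}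
    (hL : 0 ≤ L) :
    (∫ d in (0:ℝ)..L, K (y - (x + d))) - (Ioc x (x + L)).indicator (fun _ => ∫ v, K v) y =
      defect K (y - x) - defect K (y - (x + L)) := by
  have hi := kernel_integrable hK hB
  have e1 : ∫ d in (0:ℝ)..L, K (y - (x + d)) =
      (∫ v in Iic (y - x), K v) - ∫ v in Iic (y - (x + L)), K v := by
    rw [intervalIntegral.integral_Iic_sub_Iic hi.integrableOn hi.integrableOn]
    have := intervalIntegral.integral_comp_sub_left (a := 0) (b := L) K (y - x)
    simp only [sub_zero] at this
    rw [← sub_sub, ← this]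
    congr 1; ext d; congr 1; ring
  rw [e1, defect, defect]
  have e2 : (Ioc x (x + L)).indicator (fun _ => ∫ v, K v) y =
      (Ioi (0:ℝ)).indicator (fun _ => ∫ v, K v) (y - x) -
        (Ioi (0:ℝ)).indicator (fun _ => ∫ v, K v) (y - (x + L)) := by
    by_cases h1 : x < y
    · rw [indicator_of_mem (show y - x ∈ Ioi (0:ℝ) from sub_pos.2 h1)]
      by_cases h2 : x + L < y
      · rw [indicator_of_mem (show y - (x + L) ∈ Ioi (0:ℝ) from sub_pos.2 h2),
          indicator_of_notMem (fun h => (not_le.2 h2) h.2), sub_self]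
      · rw [indicator_of_notMem (show y - (x + L) ∉ Ioi (0:ℝ) from fun h => h2 (sub_pos.1 h)),
          indicator_of_mem (show y ∈ Ioc x (x + L) from ⟨h1, not_lt.1 h2⟩), sub_zero]
    · have h2 : ¬ x + L < y := fun h => h1 (by linarith)
      rw [indicator_of_notMem (show y - x ∉ Ioi (0:ℝ) from fun h => h1 (sub_pos.1 h)),
        indicator_of_notMem (show y - (x + L) ∉ Ioi (0:ℝ) from fun h => h2 (sub_pos.1 h)),
        indicator_of_notMem (fun h => h1 h.1), sub_zero]
  rw [e2]; ring

/-- Pointwise comparison of a window average with the step function. -/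
lemma window_le (hK : Continuous K) (hB : ∀ v, ‖K v‖ ≤ B / (1 + v ^ 2)) {x L η : ℝ} (y : ℝ)
    (hx : 0 < x) (hL : 0 ≤ L) (hLx : L ≤ x) (hη : 0 < η) :
    ‖(∫ d in (0:ℝ)..L, K (y - (x + d))) - (Ioc x (x + L)).indicator (fun _ => ∫ v, K v) y‖ ≤
      ((Ioc (x - η) (x + η)).indicator (fun _ => B * Real.pi) y +
        (Ioc (x + L - η) (x + L + η)).indicator (fun _ => B * Real.pi) y) +
      ((Iic (4 * x)).indicator (fun _ => 2 * B / η) y +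
        (Ioi (4 * x)).indicator (fun y => 4 * B * L * (1 / y ^ 2)) y) := by
  have hB0 : 0 ≤ B := by have := (norm_nonneg _).trans (hB 0); simpa using this
  have ind0 : ∀ c : ℝ, 0 ≤ (Ioc (c - η) (c + η)).indicator (fun _ => B * Real.pi) y := fun c =>
    indicator_nonneg (fun _ _ => by positivity) _
  rcases le_or_gt y (4 * x) with hy | hy
  · have hd : ∀ c, ‖defect K (y - c)‖ ≤
        (Ioc (c - η) (c + η)).indicator (fun _ => B * Real.pi) y + B / η := by
      intro c
      by_cases h : y ∈ Ioc (c - η) (c + η)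
      · rw [indicator_of_mem h]
        have := defect_le hK hB (y - c)
        have : 0 ≤ B / η := by positivity
        linarith
      · rw [indicator_of_notMem h, zero_add]
        refine defect_le_far hK hB hη ?_
        rw [le_abs]
        by_contra hc
        push Not at hc
        exact h ⟨by linarith, by linarith⟩
    rw [window_eq hK hB x y hL, indicator_of_mem (show y ∈ Iic (4 * x) from hy),
      indicator_of_notMem (show y ∉ Ioi (4 * x) from not_lt.2 hy)]
    have e : 2 * B / η = B / η + B / η := by ring
    linarith [norm_sub_le (defect K (y - x)) (defect K (y - (x + L))), hd x, hd (x + L)]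
  · rw [indicator_of_notMem (show y ∉ Ioc x (x + L) from fun h => by linarith [h.2]), sub_zero,
      indicator_of_notMem (show y ∉ Iic (4 * x) from not_le.2 hy),
      indicator_of_mem (show y ∈ Ioi (4 * x) from hy)]
    have hy0 : 0 < y := by linarith
    have := intervalIntegral.norm_integral_le_of_norm_le_const (a := 0) (b := L)
      (f := fun d => K (y - (x + d))) (C := 4 * B * (1 / y ^ 2)) (fun d hd => by
        rw [uIoc_of_le hL] at hd
        refine (hB _).trans ?_
        rw [mul_one_div, div_le_div_iff₀ (by positivity) (by positivity)]
        have : y / 2 ≤ y - (x + d) := by linarith [hd.2]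
        have : (y / 2) ^ 2 ≤ (y - (x + d)) ^ 2 := pow_le_pow_left₀ (by positivity) this 2
        nlinarith)
    rw [sub_zero, abs_of_nonneg hL] at this
    linarith [ind0 x, ind0 (x + L)]

variable {μ : Measure ℝ} [IsProbabilityMeasure μ]

lemma kernel_prod_integrable (hnn : ∀ᵐ y ∂μ, 0 ≤ y) (harith : ¬ IsArith μ) (hK : Continuous K)
    (hB : ∀ v, ‖K v‖ ≤ B / (1 + v ^ 2)) (x L : ℝ) :
    Integrable (fun p : ℝ × ℝ => K (p.2 - (x + p.1)))
      ((volume.restrict (Ioc 0 L)).prod (Um μ)) := by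
  have hB0 : 0 ≤ B := by have := (norm_nonneg _).trans (hB 0); simpa using this
  have h1 : Integrable (fun p : ℝ × ℝ => B * (2 * (1 + L ^ 2)) * (1 / (1 + (p.2 - x) ^ 2)))
      ((volume.restrict (Ioc 0 L)).prod (Um μ)) :=
    ((integrable_cauchy hnn harith x).comp_snd _).const_mul _
  refine h1.mono' (Continuous.aestronglyMeasurable (by fun_prop)) ?_
  have h2 : ∀ᵐ p ∂((volume.restrict (Ioc 0 L)).prod (Um μ)), p.1 ∈ Ioc 0 L :=
    Measure.quasiMeasurePreserving_fst.ae (ae_restrict_mem measurableSet_Ioc)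
  filter_upwards [h2] with p hp
  refine (hB _).trans ?_
  rw [div_eq_mul_one_div, mul_assoc B]
  refine mul_le_mul_of_nonneg_left ?_ hB0
  rw [mul_one_div, div_le_div_iff₀ (by positivity) (by positivity)]
  have hd : p.1 ^ 2 ≤ L ^ 2 := pow_le_pow_left₀ hp.1.le hp.2 2
  set u := p.2 - (x + p.1) with hu
  rw [show p.2 - x = u + p.1 by rw [hu]; ring]
  nlinarith [sq_nonneg (u - p.1), mul_nonneg (sq_nonneg u) (sq_nonneg L)]

/-- Integrating a window average against `U` gives nearly `κ U(x, x+L]`. -/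
lemma avg_bound (hnn : ∀ᵐ y ∂μ, 0 ≤ y) (harith : ¬ IsArith μ) (hK : Continuous K)
    (hB : ∀ v, ‖K v‖ ≤ B / (1 + v ^ 2)) {x L η : ℝ}
    (hx : 0 < x) (hL : 0 ≤ L) (hLx : L ≤ x) (hη : 0 < η) :
    ‖(∫ d in (0:ℝ)..L, ∫ y, K (y - (x + d)) ∂(Um μ)) -
        (Um μ).real (Ioc x (x + L)) * ∫ v, K v‖ ≤
      B * Real.pi * ((Um μ).real (Ioc (x - η) (x + η)) +
        (Um μ).real (Ioc (x + L - η) (x + L + η))) +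
      (2 * B / η * (Um μ).real (Iic (4 * x)) + 4 * B * L * (4 / (4 * x * ell μ (4 * x)))) := by
  have hB0 : 0 ≤ B := by have := (norm_nonneg _).trans (hB 0); simpa using this
  have hfin : ∀ a b, Um μ (Ioc a b) ≠ ⊤ := fun a b =>
    ((measure_mono Ioc_subset_Iic_self).trans_lt (Um_lt_top hnn harith b)).ne
  have hp := kernel_prod_integrable hnn harith hK hB x L
  have hswap : (∫ d in (0:ℝ)..L, ∫ y, K (y - (x + d)) ∂(Um μ)) =
      ∫ y, (∫ d in (0:ℝ)..L, K (y - (x + d))) ∂(Um μ) := by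
    simp only [intervalIntegral.integral_of_le hL]
    exact integral_integral_swap hp
  have hG : Integrable (fun y => ∫ d in (0:ℝ)..L, K (y - (x + d))) (Um μ) := by
    simp only [intervalIntegral.integral_of_le hL]
    exact hp.integral_prod_right
  have indi : ∀ (a b : ℝ) (c : ℝ),
      Integrable ((Ioc a b).indicator (fun _ => c)) (Um μ) := fun a b c =>
    (integrable_indicator_iff measurableSet_Ioc).2 (integrableOn_const (hfin a b))
  have indc : Integrable ((Ioc x (x + L)).indicator (fun _ => ∫ v, K v)) (Um μ) :=
    (integrable_indicator_iff measurableSet_Ioc).2 (integrableOn_const (hfin _ _))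
  have indI : Integrable ((Iic (4 * x)).indicator (fun _ => 2 * B / η)) (Um μ) :=
    (integrable_indicator_iff measurableSet_Iic).2
      (integrableOn_const (Um_lt_top hnn harith _).ne)
  have indF : Integrable ((Ioi (4 * x)).indicator (fun y => 4 * B * L * (1 / y ^ 2))) (Um μ) :=
    (integrable_indicator_iff measurableSet_Ioi).2
      ((far_integrable hnn harith (by positivity)).const_mul _)
  have hκ : ((Um μ).real (Ioc x (x + L)) : ℂ) * ∫ v, K v =
      ∫ y, (Ioc x (x + L)).indicator (fun _ => ∫ v, K v) y ∂(Um μ) := by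
    rw [integral_indicator_const _ measurableSet_Ioc, Complex.real_smul]
  rw [hswap, hκ, ← integral_sub hG indc]
  have step := norm_integral_le_of_norm_le (((indi _ _ _).add (indi _ _ _)).add (indI.add indF))
    (ae_of_all (Um μ) fun y => window_le hK hB y hx hL hLx hη)
  refine step.trans ?_
  rw [integral_add' ((indi _ _ _).add (indi _ _ _)) (indI.add indF),
    integral_add' (indi _ _ _) (indi _ _ _), integral_add' indI indF,
    integral_indicator_const _ measurableSet_Ioc, integral_indicator_const _ measurableSet_Ioc,
    integral_indicator_const _ measurableSet_Iic, integral_indicator measurableSet_Ioi,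
    integral_const_mul]
  have hfar := mul_le_mul_of_nonneg_left (far_le hnn harith (show 0 < 4 * x by positivity))
    (show 0 ≤ 4 * B * L by positivity)
  simp only [smul_eq_mul]
  linarith

end Kernel

end Renew

namespace Renew

/-! ### The limit for band-limited kernels -/

variable {μ : Measure ℝ} [IsProbabilityMeasure μ]

lemma Um_Ioc (hnn : ∀ᵐ y ∂μ, 0 ≤ y) (harith : ¬ IsArith μ) {a b : ℝ} (hab : a ≤ b) :
    (Um μ).real (Ioc a b) = (Um μ).real (Iic b) - (Um μ).real (Iic a) := by
  have h : Iic b = Iic a ∪ Ioc a b := (Iic_union_Ioc_eq_Iic hab).symm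
  rw [h, measureReal_union (Iic_disjoint_Ioc le_rfl) measurableSet_Ioc
    (Um_lt_top hnn harith a).ne
    ((measure_mono Ioc_subset_Iic_self).trans_lt (Um_lt_top hnn harith b)).ne]
  ring

/-- Averaging over a window of length `L ≤ εx` costs at most the increment bound. -/
lemma sub_avg_le (hnn : ∀ᵐ y ∂μ, 0 ≤ y) (harith : ¬ IsArith μ) {K : ℝ → ℂ} {B : ℝ}
    (hK : Continuous K) (hB : ∀ v, ‖K v‖ ≤ B / (1 + v ^ 2)) {x L S : ℝ} (hL : 0 ≤ L)
    (h : ∀ d, 0 ≤ d → d ≤ L →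
      ‖(∫ y, K (y - x) ∂(Um μ)) - ∫ y, K (y - (x + d)) ∂(Um μ)‖ ≤ S) :
    ‖L * (∫ y, K (y - x) ∂(Um μ)) - ∫ d in (0:ℝ)..L, ∫ y, K (y - (x + d)) ∂(Um μ)‖ ≤ S * L := by
  have hi : IntervalIntegrable (fun d => ∫ y, K (y - (x + d)) ∂(Um μ)) volume 0 L := by
    rw [intervalIntegrable_iff_integrableOn_Ioc_of_le hL]
    exact (kernel_prod_integrable hnn harith hK hB x L).integral_prod_left
  have e : L * (∫ y, K (y - x) ∂(Um μ)) - ∫ d in (0:ℝ)..L, ∫ y, K (y - (x + d)) ∂(Um μ) =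
      ∫ d in (0:ℝ)..L, ((∫ y, K (y - x) ∂(Um μ)) - ∫ y, K (y - (x + d)) ∂(Um μ)) := by
    rw [intervalIntegral.integral_sub intervalIntegrable_const hi,
      intervalIntegral.integral_const, Complex.real_smul, sub_zero]
  rw [e]
  have := intervalIntegral.norm_integral_le_of_norm_le_const (a := 0) (b := L) (C := S)
    (f := fun d => (∫ y, K (y - x) ∂(Um μ)) - ∫ y, K (y - (x + d)) ∂(Um μ)) (fun d hd => by
      rw [uIoc_of_le hL] at hd
      exact h d hd.1.le hd.2)
  rwa [sub_zero, abs_of_nonneg hL] at this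

/-- For a kernel with compactly supported Lipschitz Fourier transform, `ℓ(x) ∫ K(y - x) dU(y)` tends
to `∫ K`. By `I_diff` the integral may be averaged over a window of length `L = εx`; by `avg_bound`
the average is nearly `U(x, x + L] ∫ K / L`, and `U(x, x + L] ~ L / ℓ(x)` by `tendsto_U`. -/
lemma tendsto_I (hnn : ∀ᵐ y ∂μ, 0 ≤ y) (harith : ¬ IsArith μ) (hsv : SlowlyVarying (ell μ))
    {T M B : ℝ} (hT : 0 < T) (hM : 0 ≤ M) {k : ℝ → ℝ} (hk : LipschitzWith 1 k)
    (hkT : ∀ t, T ≤ |t| → k t = 0) (hkM : ∀ t, |k t| ≤ M)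
    (hB : ∀ v, ‖Kf k v‖ ≤ B / (1 + v ^ 2)) :
    Tendsto (fun x => (ell μ x : ℂ) * ∫ y, Kf k (y - x) ∂(Um μ)) atTop (𝓝 (∫ v, Kf k v)) := by
  have hB0 : 0 ≤ B := by have := (norm_nonneg _).trans (hB 0); simpa using this
  have hKc : Continuous (Kf k) := continuous_Kf (integrable_of_support hk.continuous hkT)
  obtain ⟨C, hC, hdiff⟩ := I_diff hnn harith hsv hT hM hk hkT hkM hB
  set κ := ∫ v, Kf k v with hκ
  set N := B * Real.pi with hN
  have hN0 : 0 ≤ N := by positivity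
  rw [Metric.tendsto_nhds]
  intro η hη
  -- window `ε = A⁻²` and edge width `δ = A⁻⁴`, so that every error is `O(1/A)`
  set A := max 2 ((2 * C + 4 * N) / η + 1) with hA
  have hA2 : 2 ≤ A := le_max_left _ _
  have hA0 : 0 < A := by linarith
  have hAη : (2 * C + 4 * N) / A < η := by
    rw [div_lt_iff₀ hA0, ← div_lt_iff₀' hη]
    exact lt_of_lt_of_le (by linarith) (le_max_right 2 _)
  set ε := 1 / A ^ 2 with hε
  set δ := 1 / A ^ 4 with hδ
  have hε0 : 0 < ε := by positivity
  have hδ0 : 0 < δ := by positivity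
  have hε1 : ε ≤ 1 := by
    rw [hε, div_le_one (by positivity)]; nlinarith
  have hδ1 : δ < 1 := by
    rw [hδ, div_lt_one (by positivity)]
    calc (1:ℝ) < 2 ^ 4 := by norm_num
      _ ≤ A ^ 4 := pow_le_pow_left₀ (by norm_num) hA2 4
  set u : ℝ → ℝ → ℝ := fun c x => ell μ x * (Um μ).real (Iic (c * x)) / x with hu
  have ut : ∀ c, 0 < c → Tendsto (u c) atTop (𝓝 c) := fun c hc => tendsto_U hnn harith hsv hc
  set ρ : ℝ → ℝ → ℝ := fun c x => ell μ (c * x) / ell μ x with hρ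
  have ρt : ∀ c, 0 < c → Tendsto (ρ c) atTop (𝓝 1) := fun c hc => tendsto_ell_ratio hsv hc
  have t1 : Tendsto (fun x => C * (A * ε / ρ (1 / A) x + ρ 2 x / (A * ρ (1 / A) x ^ 2))) atTop
      (𝓝 (C * (A * ε / 1 + 1 / (A * 1 ^ 2)))) :=
    ((tendsto_const_nhds.div (ρt _ (by positivity)) one_ne_zero).add
      ((ρt 2 two_pos).div (((ρt _ (by positivity)).pow 2).const_mul A) (by positivity))).const_mul C
  have t2 : Tendsto (fun x => ‖κ‖ * |(u (1 + ε) x - u 1 x) / ε - 1|) atTop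
      (𝓝 (‖κ‖ * |((1 + ε) - 1) / ε - 1|)) :=
    (((((ut _ (by positivity)).sub (ut 1 one_pos)).div_const ε).sub_const 1).abs).const_mul _
  have t3 : Tendsto (fun x => N / ε * ((u (1 + δ) x - u (1 - δ) x) +
      (u (1 + ε + δ) x - u (1 + ε - δ) x))) atTop
      (𝓝 (N / ε * (((1 + δ) - (1 - δ)) + ((1 + ε + δ) - (1 + ε - δ))))) :=
    (((ut _ (by positivity)).sub (ut _ (by linarith))).add
      ((ut _ (by positivity)).sub (ut _ (by linarith)))).const_mul _
  have t4 : Tendsto (fun x => 2 * B / (δ * ε) * (u 4 x / x)) atTop (𝓝 (2 * B / (δ * ε) * 0)) :=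
    ((ut 4 (by norm_num)).div_atTop tendsto_id).const_mul _
  have t5 : Tendsto (fun x => 4 * B * ((1 / ρ 4 x) / x)) atTop (𝓝 (4 * B * 0)) :=
    ((tendsto_const_nhds.div (ρt 4 (by norm_num)) one_ne_zero).div_atTop tendsto_id).const_mul _
  have tt := t1.add (t2.add (t3.add (t4.add t5)))
  have hlim : C * (A * ε / 1 + 1 / (A * 1 ^ 2)) + (‖κ‖ * |((1 + ε) - 1) / ε - 1| +
      (N / ε * (((1 + δ) - (1 - δ)) + ((1 + ε + δ) - (1 + ε - δ))) +
        (2 * B / (δ * ε) * 0 + 4 * B * 0))) < η := by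
    have h1 : ((1 + ε) - 1) / ε - 1 = 0 := by field_simp; ring
    rw [h1, abs_zero]
    have h2 : C * (A * ε / 1 + 1 / (A * 1 ^ 2)) = 2 * C / A := by
      rw [hε]; field_simp; ring
    have h3 : N / ε * (((1 + δ) - (1 - δ)) + ((1 + ε + δ) - (1 + ε - δ))) = 4 * N / A / A := by
      rw [hε, hδ]; field_simp; ring
    rw [h2, h3]
    have h4 : 4 * N / A / A ≤ 4 * N / A := div_le_self (by positivity) (by linarith)
    have h5 : (2 * C + 4 * N) / A = 2 * C / A + 4 * N / A := add_div _ _ _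
    linarith
  filter_upwards [tt.eventually_lt_const hlim, eventually_ge_atTop (A / T), eventually_gt_atTop 0]
    with x hx hxA hx0
  refine lt_of_le_of_lt ?_ hx
  rw [dist_eq_norm]
  set L := ε * x with hL
  have hL0 : 0 < L := by positivity
  have hLx : L ≤ x := by rw [hL]; nlinarith
  have hlx := ell_pos hnn harith hx0
  have hlA := ell_pos hnn harith (show 0 < 1 / A * x by positivity)
  have hl4 := ell_pos hnn harith (show 0 < 4 * x by positivity)
  set W := ∫ d in (0:ℝ)..L, ∫ y, Kf k (y - (x + d)) ∂(Um μ) with hW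
  set Ix := ∫ y, Kf k (y - x) ∂(Um μ) with hIx
  have a1 := sub_avg_le hnn harith hKc hB hL0.le
    (fun d h0 h1 => hdiff A ε x d (by linarith) hε0.le hε1 hxA h0 h1)
  have a2 := avg_bound hnn harith hKc hB hx0 hL0.le hLx (mul_pos hδ0 hx0)
  rw [← hW, ← hIx] at a1
  rw [← hW, ← hκ, ← hN] at a2
  have hLc : (L : ℂ) ≠ 0 := by exact_mod_cast hL0.ne'
  have decomp : (ell μ x : ℂ) * Ix - κ =
      ((ell μ x / L : ℝ) : ℂ) * (L * Ix - W) +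
      (((ell μ x / L * (Um μ).real (Ioc x (x + L)) - 1 : ℝ) : ℂ) * κ +
        ((ell μ x / L : ℝ) : ℂ) * (W - (Um μ).real (Ioc x (x + L)) * κ)) := by
    push_cast
    field_simp
    ring
  rw [decomp]
  have hq0 : 0 ≤ ell μ x / L := by positivity
  have b1 : ‖((ell μ x / L : ℝ) : ℂ) * (L * Ix - W)‖ ≤
      C * (A * ε / ρ (1 / A) x + ρ 2 x / (A * ρ (1 / A) x ^ 2)) := by
    rw [norm_mul, Complex.norm_real, Real.norm_eq_abs, abs_of_nonneg hq0]
    refine (mul_le_mul_of_nonneg_left a1 hq0).trans (le_of_eq ?_)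
    rw [show x / A = 1 / A * x by ring]
    simp only [hρ]
    field_simp
  have b2 : ‖((ell μ x / L * (Um μ).real (Ioc x (x + L)) - 1 : ℝ) : ℂ) * κ‖ =
      ‖κ‖ * |(u (1 + ε) x - u 1 x) / ε - 1| := by
    rw [norm_mul, Complex.norm_real, Real.norm_eq_abs, mul_comm]
    congr 2
    rw [Um_Ioc hnn harith (by linarith), show x + L = (1 + ε) * x by rw [hL]; ring]
    simp only [hu, hL, one_mul]
    field_simp
  have b3 : ‖((ell μ x / L : ℝ) : ℂ) * (W - (Um μ).real (Ioc x (x + L)) * κ)‖ ≤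
      N / ε * ((u (1 + δ) x - u (1 - δ) x) + (u (1 + ε + δ) x - u (1 + ε - δ) x)) +
      (2 * B / (δ * ε) * (u 4 x / x) + 4 * B * ((1 / ρ 4 x) / x)) := by
    rw [norm_mul, Complex.norm_real, Real.norm_eq_abs, abs_of_nonneg hq0]
    refine (mul_le_mul_of_nonneg_left a2 hq0).trans (le_of_eq ?_)
    have hδx : 0 < δ * x := mul_pos hδ0 hx0
    rw [Um_Ioc hnn harith (by linarith), Um_Ioc hnn harith (by linarith),
      show x + δ * x = (1 + δ) * x by ring, show x - δ * x = (1 - δ) * x by ring,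
      show x + L + δ * x = (1 + ε + δ) * x by rw [hL]; ring,
      show x + L - δ * x = (1 + ε - δ) * x by rw [hL]; ring]
    simp only [hu, hρ, hL]
    field_simp
  refine (norm_add_le _ _).trans (add_le_add b1 ((norm_add_le _ _).trans ?_))
  rw [b2]
  gcongr

end Renew

namespace Renew

/-! ### Fejér kernels -/

/-- The triangular function of half-width `b` centred at `θ`. -/
noncomputable def tri (b θ t : ℝ) : ℝ := max 0 (b - |t - θ|)

lemma tri_lip (b θ : ℝ) : LipschitzWith 1 (tri b θ) := by
  refine LipschitzWith.of_dist_le_mul fun s t => ?_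
  rw [Real.dist_eq, Real.dist_eq, NNReal.coe_one, one_mul, tri, tri]
  have h := abs_max_sub_max_le_max (0:ℝ) (b - |s - θ|) 0 (b - |t - θ|)
  have h2 := abs_abs_sub_abs_le (t - θ) (s - θ)
  rw [sub_self, abs_zero, max_eq_right (abs_nonneg (b - |s - θ| - (b - |t - θ|)))] at h
  rw [show b - |s - θ| - (b - |t - θ|) = |t - θ| - |s - θ| by ring] at h
  rw [show t - θ - (s - θ) = -(s - t) by ring, abs_neg] at h2
  exact h.trans h2

lemma tri_supp {b θ t : ℝ} (h : |θ| + b ≤ |t|) : tri b θ t = 0 := by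
  have := abs_sub_abs_le_abs_sub t θ
  exact max_eq_left (by linarith)

lemma tri_le {b : ℝ} (hb : 0 ≤ b) (θ t : ℝ) : |tri b θ t| ≤ b := by
  rw [tri, abs_of_nonneg (le_max_left _ _)]
  exact max_le hb (by linarith [abs_nonneg (t - θ)])

/-- The (unnormalised) Fejér kernel, as the cosine transform of the triangular function. -/
noncomputable def fej (b v : ℝ) : ℝ := ∫ s in (0:ℝ)..b, 2 * (b - s) * Real.cos (s * v)

lemma fej_of_ne {b v : ℝ} (hv : v ≠ 0) : fej b v = 2 * (1 - Real.cos (b * v)) / v ^ 2 := by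
  have hd : ∀ s : ℝ, HasDerivAt
      (fun s => 2 * (b - s) * Real.sin (s * v) / v - 2 * Real.cos (s * v) / v ^ 2)
      (2 * (b - s) * Real.cos (s * v)) s := by
    intro s
    have h1 : HasDerivAt (fun s : ℝ => s * v) v s := by simpa using (hasDerivAt_id s).mul_const v
    have h2 : HasDerivAt (fun s : ℝ => 2 * (b - s)) (2 * (-1)) s :=
      ((hasDerivAt_id s).const_sub b).const_mul 2
    have := ((h2.mul h1.sin).div_const v).sub ((h1.cos.const_mul 2).div_const (v ^ 2))
    refine this.congr_deriv ?_
    field_simp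
    ring
  rw [fej, intervalIntegral.integral_eq_sub_of_hasDerivAt (fun s _ => hd s)
    (Continuous.intervalIntegrable (by fun_prop) _ _)]
  simp
  ring

lemma fej_zero (b : ℝ) : fej b 0 = b ^ 2 := by
  have hd : ∀ s : ℝ, HasDerivAt (fun s => 2 * b * s - s ^ 2) (2 * (b - s) * Real.cos (s * 0)) s := by
    intro s
    have := ((hasDerivAt_id s).const_mul (2 * b)).sub ((hasDerivAt_id s).pow 2)
    refine this.congr_deriv ?_
    simp
    ring
  rw [fej, intervalIntegral.integral_eq_sub_of_hasDerivAt (fun s _ => hd s)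
    (Continuous.intervalIntegrable (by fun_prop) _ _)]
  ring

lemma fej_nonneg (b v : ℝ) : 0 ≤ fej b v := by
  rcases eq_or_ne v 0 with h | h
  · rw [h, fej_zero]; positivity
  · rw [fej_of_ne h]
    have := Real.cos_le_one (b * v)
    have : 0 ≤ 1 - Real.cos (b * v) := by linarith
    positivity

lemma fej_pos {b v : ℝ} (hb : 0 < b) (hv : b * |v| < 2 * Real.pi) : 0 < fej b v := by
  rcases eq_or_ne v 0 with h | h
  · rw [h, fej_zero]; positivity
  · rw [fej_of_ne h]
    have h1 : Real.cos (b * v) ≠ 1 := by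
      intro h2
      have habs : |b * v| < 2 * Real.pi := by rwa [abs_mul, abs_of_pos hb]
      rw [abs_lt] at habs
      have := (Real.cos_eq_one_iff_of_lt_of_lt habs.1 habs.2).1 h2
      exact (mul_ne_zero hb.ne' h) this
    have h3 : 0 < 1 - Real.cos (b * v) := by
      have := lt_of_le_of_ne (Real.cos_le_one (b * v)) h1
      linarith
    positivity

lemma fej_le {b : ℝ} (v : ℝ) : fej b v ≤ (b ^ 2 + 4) / (1 + v ^ 2) := by
  rw [le_div_iff₀ (by positivity)]
  rcases eq_or_ne v 0 with h | h
  · rw [h, fej_zero]; norm_num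
  · rw [fej_of_ne h]
    have hv : 0 < v ^ 2 := by positivity
    have h1 := Real.one_sub_sq_div_two_le_cos (x := b * v)
    have h2 := Real.neg_one_le_cos (b * v)
    have e : 2 * (1 - Real.cos (b * v)) / v ^ 2 * (1 + v ^ 2) =
        2 * (1 - Real.cos (b * v)) / v ^ 2 + 2 * (1 - Real.cos (b * v)) := by field_simp
    have h3 : 2 * (1 - Real.cos (b * v)) / v ^ 2 ≤ b ^ 2 := by
      rw [div_le_iff₀ hv]; nlinarith
    rw [e]; linarith

/-- A shift in frequency multiplies the Fejér kernel by the character `e^{iθv}`. -/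
lemma Kf_tri {b : ℝ} (hb : 0 < b) (θ v : ℝ) :
    Kf (tri b θ) v = Complex.exp (θ * v * Complex.I) * (fej b v : ℂ) := by
  set f : ℝ → ℂ := fun s => Complex.exp (s * v * Complex.I) * (tri b 0 s : ℂ) with hf
  have hi : Integrable f := integrable_exp_mul
    (integrable_of_support (T := |(0:ℝ)| + b) (tri_lip b 0).continuous (fun t => tri_supp)).ofReal v
  have e1 : Kf (tri b θ) v = Complex.exp (θ * v * Complex.I) * ∫ s, f s := by
    rw [Kf, ← integral_const_mul, ← integral_add_right_eq_self _ θ]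
    congr 1
    ext s
    have : Complex.exp ((s + θ : ℝ) * v * Complex.I) =
        Complex.exp (θ * v * Complex.I) * Complex.exp (s * v * Complex.I) := by
      rw [← Complex.exp_add]; congr 1; push_cast; ring
    rw [this, hf, mul_assoc]
    simp [tri]
  have hneg : ∀ s, f s + f (-s) = ((2 * tri b 0 s * Real.cos (s * v) : ℝ) : ℂ) := by
    intro s
    have ht : tri b 0 (-s) = tri b 0 s := by simp [tri]
    simp only [hf, ht]
    rw [← add_mul]
    push_cast
    rw [Complex.cos, neg_mul, neg_mul, Complex.exp_neg]
    ring
  have e2 : ∫ s, f s = (fej b v : ℂ) := by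
    rw [← intervalIntegral.integral_Iic_add_Ioi (b := 0) hi.integrableOn hi.integrableOn,
      show (0:ℝ) = -0 by simp, ← integral_comp_neg_Ioi, neg_zero, add_comm,
      ← integral_add hi.integrableOn hi.comp_neg.integrableOn]
    simp only [hneg]
    have h3 : ∫ s in Ioi 0, 2 * tri b 0 s * Real.cos (s * v) =
        ∫ s in Ioc 0 b, 2 * tri b 0 s * Real.cos (s * v) := by
      refine setIntegral_eq_of_subset_of_forall_sdiff_eq_zero measurableSet_Ioi
        Ioc_subset_Ioi_self fun s hs => ?_
      have h0 : 0 < s := hs.1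
      have : b < s := not_le.1 fun h => hs.2 ⟨h0, h⟩
      simp [tri, abs_of_pos h0, this.le]
    rw [integral_complex_ofReal, fej, intervalIntegral.integral_of_le hb.le, h3]
    congr 1
    refine setIntegral_congr_fun measurableSet_Ioc fun s hs => ?_
    simp only [tri]
    rw [sub_zero, abs_of_pos hs.1, max_eq_right (by linarith [hs.2])]
  rw [e1, e2]

lemma integrable_tri (b θ : ℝ) : Integrable (tri b θ) :=
  integrable_of_support (tri_lip b θ).continuous (fun _ => tri_supp)

lemma continuous_fej {b : ℝ} (hb : 0 < b) : Continuous (fej b) := by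
  have h := continuous_Kf (integrable_tri b 0)
  have e : fej b = fun v => (Kf (tri b 0) v).re := by
    ext v
    rw [Kf_tri hb]; simp
  rw [e]
  exact Complex.continuous_re.comp h

lemma Kf_tri_le {b : ℝ} (hb : 0 < b) (θ v : ℝ) : ‖Kf (tri b θ) v‖ ≤ (b ^ 2 + 4) / (1 + v ^ 2) := by
  rw [Kf_tri hb, norm_mul, norm_exp_mul_I, one_mul, Complex.norm_real, Real.norm_eq_abs,
    abs_of_nonneg (fej_nonneg b v)]
  exact fej_le v

lemma integrable_fej {b : ℝ} (hb : 0 < b) : Integrable (fej b) := by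
  refine (integrable_inv_one_add_sq.const_mul (b ^ 2 + 4)).mono'
    (continuous_fej hb).aestronglyMeasurable (ae_of_all _ fun v => ?_)
  rw [Real.norm_eq_abs, abs_of_nonneg (fej_nonneg b v), ← div_eq_mul_inv]
  exact fej_le v

variable {μ : Measure ℝ} [IsProbabilityMeasure μ]

lemma integrable_fej_Um (hnn : ∀ᵐ y ∂μ, 0 ≤ y) (harith : ¬ IsArith μ) {b : ℝ} (hb : 0 < b) (x : ℝ) :
    Integrable (fun y => fej b (y - x)) (Um μ) := by
  refine ((integrable_cauchy hnn harith x).const_mul (b ^ 2 + 4)).mono'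
    ((continuous_fej hb).comp (continuous_id.sub continuous_const)).aestronglyMeasurable
    (ae_of_all _ fun v => ?_)
  rw [Real.norm_eq_abs, abs_of_nonneg (fej_nonneg b _), mul_one_div]
  exact fej_le _

/-- `tendsto_I` for a Fejér kernel times a character: pointwise convergence of the characteristic
functions of the Fejér-weighted renewal measures. -/
lemma tendsto_fej (hnn : ∀ᵐ y ∂μ, 0 ≤ y) (harith : ¬ IsArith μ) (hsv : SlowlyVarying (ell μ))
    {b : ℝ} (hb : 0 < b) (θ : ℝ) :
    Tendsto (fun x => (ell μ x : ℂ) * ∫ y, Complex.exp (θ * (y - x : ℝ) * Complex.I) *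
      (fej b (y - x) : ℂ) ∂(Um μ)) atTop
      (𝓝 (∫ v : ℝ, Complex.exp (θ * v * Complex.I) * (fej b v : ℂ))) := by
  have := tendsto_I hnn harith hsv (T := |θ| + b) (by positivity) hb.le (tri_lip b θ)
    (fun t => tri_supp) (tri_le hb.le θ) (Kf_tri_le hb θ)
  simpa only [Kf_tri hb] using this

end Renew

namespace Renew

/-! ### From Fejér kernels to intervals -/

/-- Lévy's continuity theorem for finite measures with a nonzero limit. -/
lemma levy_finite {M : ℕ → FiniteMeasure ℝ} {L : FiniteMeasure ℝ} (hL : L ≠ 0)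
    (h : ∀ t : ℝ, Tendsto (fun n => charFun (M n : Measure ℝ) t) atTop
      (𝓝 (charFun (L : Measure ℝ) t))) : Tendsto M atTop (𝓝 L) := by
  have hm : Tendsto (fun n => (M n).mass) atTop (𝓝 L.mass) := by
    have h0 := h 0
    simp only [charFun_zero] at h0
    have h1 := (Complex.continuous_re.tendsto _).comp h0
    rw [← NNReal.tendsto_coe]
    exact h1
  have hne : ∀ᶠ n in atTop, M n ≠ 0 := by
    filter_upwards [hm.eventually_ne (L.mass_nonzero_iff.2 hL)] with n hn
    exact (M n).mass_nonzero_iff.1 hn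
  refine FiniteMeasure.tendsto_of_tendsto_normalize_testAgainstNN_of_tendsto_mass ?_ hm
  refine ProbabilityMeasure.tendsto_of_tendsto_charFun fun t => ?_
  have key : ∀ K : FiniteMeasure ℝ, K ≠ 0 →
      charFun (K.normalize : Measure ℝ) t = (((K.mass)⁻¹ : ℝ) : ℂ) * charFun (K : Measure ℝ) t := by
    intro K hK
    rw [K.toMeasure_normalize_eq_of_nonzero hK, charFun_apply_real, charFun_apply_real,
      integral_smul_nnreal_measure, NNReal.smul_def, Complex.real_smul, NNReal.coe_inv]
  rw [key L hL]
  have hm' : Tendsto (fun n => (((((M n).mass)⁻¹ : ℝ)) : ℂ)) atTop (𝓝 (((L.mass)⁻¹ : ℝ) : ℂ)) := by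
    have h2 : Tendsto (fun n => ((M n).mass : ℝ)) atTop (𝓝 (L.mass : ℝ)) := NNReal.tendsto_coe.2 hm
    have h3 := h2.inv₀ (NNReal.coe_ne_zero.2 (L.mass_nonzero_iff.2 hL))
    exact (Complex.continuous_ofReal.tendsto _).comp h3
  refine (hm'.mul (h t)).congr' ?_
  filter_upwards [hne] with n hn
  rw [key _ hn]

/-- The density `fej b` as a measure, with respect to `ν`. -/
noncomputable def fejMeas (b : ℝ) (ν : Measure ℝ) : Measure ℝ :=
  ν.withDensity fun v => ENNReal.ofReal (fej b v)

lemma integral_fejMeas {E : Type*} [NormedAddCommGroup E] [NormedSpace ℝ E] {b : ℝ} (hb : 0 < b)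
    (ν : Measure ℝ) (f : ℝ → E) : ∫ v, f v ∂(fejMeas b ν) = ∫ v, fej b v • f v ∂ν := by
  rw [fejMeas, integral_withDensity_eq_integral_toReal_smul
    (continuous_fej hb).measurable.ennreal_ofReal (ae_of_all _ fun v => ENNReal.ofReal_lt_top)]
  simp_rw [ENNReal.toReal_ofReal (fej_nonneg b _)]

lemma fejMeas_finite {b : ℝ} {ν : Measure ℝ} (h : Integrable (fej b) ν) :
    IsFiniteMeasure (fejMeas b ν) :=
  isFiniteMeasure_withDensity_ofReal h.hasFiniteIntegral

variable {μ : Measure ℝ} [IsProbabilityMeasure μ]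

/-- The renewal measure seen from `x`, weighted by `ℓ(x)` and by the Fejér kernel. -/
noncomputable def scaled (μ : Measure ℝ) (b x : ℝ) : Measure ℝ :=
  ENNReal.ofReal (ell μ x) • fejMeas b ((Um μ).map fun y => y - x)

lemma scaled_finite (hnn : ∀ᵐ y ∂μ, 0 ≤ y) (harith : ¬ IsArith μ) {b : ℝ} (hb : 0 < b) (x : ℝ) :
    IsFiniteMeasure (scaled μ b x) := by
  have : IsFiniteMeasure (fejMeas b ((Um μ).map fun y => y - x)) := by
    refine fejMeas_finite ?_
    rw [integrable_map_measure (continuous_fej hb).aestronglyMeasurable (by fun_prop)]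
    exact integrable_fej_Um hnn harith hb x
  exact Measure.smul_finite _ ENNReal.ofReal_ne_top

lemma integral_scaled {E : Type*} [NormedAddCommGroup E] [NormedSpace ℝ E] {b : ℝ} (hb : 0 < b)
    (hnn : ∀ᵐ y ∂μ, 0 ≤ y) {x : ℝ} (hx : 0 ≤ x) (f : ℝ → E) :
    ∫ v, f v ∂(scaled μ b x) = ell μ x • ∫ y, fej b (y - x) • f (y - x) ∂(Um μ) := by
  rw [scaled, integral_smul_measure, ENNReal.toReal_ofReal (ell_nonneg hnn hx), integral_fejMeas hb]
  congr 1
  exact integral_map_equiv (MeasurableEquiv.subRight x) (fun v => fej b v • f v)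

/-- The weighted measures converge weakly, since `tendsto_fej` gives convergence of their
characteristic functions. -/
lemma tendsto_test (hnn : ∀ᵐ y ∂μ, 0 ≤ y) (harith : ¬ IsArith μ) (hsv : SlowlyVarying (ell μ))
    {b : ℝ} (hb : 0 < b) (f : BoundedContinuousFunction ℝ ℝ) :
    Tendsto (fun x => ell μ x * ∫ y, fej b (y - x) * f (y - x) ∂(Um μ)) atTop
      (𝓝 (∫ v, fej b v * f v)) := by
  refine tendsto_of_seq_tendsto fun u hu => ?_
  let M : ℕ → FiniteMeasure ℝ := fun n => ⟨scaled μ b (u n), scaled_finite hnn harith hb (u n)⟩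
  let L : FiniteMeasure ℝ := ⟨fejMeas b volume, fejMeas_finite (integrable_fej hb)⟩
  have hL : L ≠ 0 := by
    intro h0
    have h1 : fejMeas b volume = 0 := congrArg (fun K : FiniteMeasure ℝ => (K : Measure ℝ)) h0
    have h2 : ∫ v, fej b v = 0 := by
      have := integral_fejMeas hb volume (fun _ => (1:ℝ))
      rw [h1] at this
      simpa using this.symm
    rw [integral_eq_zero_iff_of_nonneg (fej_nonneg b) (integrable_fej hb)] at h2
    have h3 := congrFun (((continuous_fej hb).ae_eq_iff_eq volume continuous_const).1 h2) 0
    have h4 := fej_pos (v := 0) hb (by simpa using Real.pi_pos)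
    exact h4.ne' h3
  have hlim : Tendsto M atTop (𝓝 L) := by
    refine levy_finite hL fun t => ?_
    have := (tendsto_fej hnn harith hsv hb t).comp hu
    have e1 : charFun (L : Measure ℝ) t = ∫ v : ℝ, Complex.exp (t * v * Complex.I) * (fej b v : ℂ) := by
      rw [charFun_apply_real]
      refine (integral_fejMeas hb volume _).trans ?_
      simp_rw [Complex.real_smul, mul_comm]
    rw [e1]
    refine this.congr' ?_
    filter_upwards [hu.eventually_ge_atTop 0] with n hn
    rw [charFun_apply_real]
    refine Eq.symm ((integral_scaled hb hnn hn _).trans ?_)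
    simp only [Complex.real_smul, Function.comp]
    congr 1
    congr 1
    ext y
    rw [mul_comm]
  have := FiniteMeasure.tendsto_iff_forall_integral_tendsto.1 hlim f
  have e2 : ∫ v, f v ∂(L : Measure ℝ) = ∫ v, fej b v * f v := integral_fejMeas hb volume _
  rw [e2] at this
  refine this.congr' ?_
  filter_upwards [hu.eventually_ge_atTop 0] with n hn
  exact integral_scaled hb hnn hn _

end Renew

namespace Renew

variable {μ : Measure ℝ} [IsProbabilityMeasure μ]

/-- Vague convergence of `ℓ(x) U(x + ·)` to Lebesgue measure: a test function supported where the
Fejér kernel is positive is the kernel times a bounded continuous function. -/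
lemma tendsto_compact (hnn : ∀ᵐ y ∂μ, 0 ≤ y) (harith : ¬ IsArith μ) (hsv : SlowlyVarying (ell μ))
    {h : ℝ} (hh : 0 < h) {g : ℝ → ℝ} (hg : Continuous g) (hg1 : ∀ v, |g v| ≤ 1)
    (hgs : ∀ v, 2 * h < |v| → g v = 0) :
    (∀ x, Integrable (fun y => g (y - x)) (Um μ)) ∧ Integrable g ∧
    Tendsto (fun x => ell μ x * ∫ y, g (y - x) ∂(Um μ)) atTop (𝓝 (∫ v, g v)) := by
  have hb : 0 < 1 / h := by positivity
  have hcf := continuous_fej hb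
  obtain ⟨v₀, hv₀, hmin⟩ := (isCompact_Icc (a := -(2 * h)) (b := 2 * h)).exists_isMinOn
    ⟨0, by constructor <;> linarith⟩ hcf.continuousOn
  set m := fej (1 / h) v₀ with hm
  have hm0 : 0 < m := by
    refine fej_pos hb ?_
    have h1 : |v₀| ≤ 2 * h := abs_le.2 hv₀
    have h2 : 1 / h * |v₀| ≤ 2 := by
      rw [one_div_mul_eq_div, div_le_iff₀ hh]; exact h1
    linarith [Real.pi_gt_three]
  have hle : ∀ v, |v| ≤ 2 * h → m ≤ fej (1 / h) v := fun v hv => hmin (abs_le.1 hv)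
  let f : BoundedContinuousFunction ℝ ℝ := BoundedContinuousFunction.ofNormedAddCommGroup
    (fun v => g v / max (fej (1 / h) v) m)
    (hg.div (hcf.max continuous_const) fun v => (lt_max_of_lt_right hm0).ne') (1 / m) (by
      intro v
      rw [Real.norm_eq_abs, abs_div, abs_of_pos (lt_max_of_lt_right hm0)]
      exact div_le_div₀ zero_le_one (hg1 v) hm0 (le_max_right _ _))
  have hfg : ∀ v, fej (1 / h) v * f v = g v := by
    intro v
    change fej (1 / h) v * (g v / max (fej (1 / h) v) m) = g v
    rcases le_or_gt |v| (2 * h) with hv | hv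
    · have := hle v hv
      rw [max_eq_left this, mul_div_cancel₀ _ (hm0.trans_le this).ne']
    · simp [hgs v hv]
  have hgle : ∀ v, ‖g v‖ ≤ 1 / m * fej (1 / h) v := by
    intro v
    rw [Real.norm_eq_abs]
    rcases le_or_gt |v| (2 * h) with hv | hv
    · refine (hg1 v).trans ?_
      rw [one_div_mul_eq_div, le_div_iff₀ hm0, one_mul]
      exact hle v hv
    · rw [hgs v hv, abs_zero]
      exact mul_nonneg (by positivity) (fej_nonneg _ _)
  refine ⟨fun x => ?_, ?_, ?_⟩
  · exact ((integrable_fej_Um hnn harith hb x).const_mul (1 / m)).mono'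
      (hg.comp (continuous_id.sub continuous_const)).aestronglyMeasurable
      (ae_of_all _ fun y => hgle _)
  · exact ((integrable_fej hb).const_mul (1 / m)).mono' hg.aestronglyMeasurable (ae_of_all _ hgle)
  · simpa only [hfg] using tendsto_test hnn harith hsv hb f

/-- The trapezoid equal to `1` within distance `w` of `c` and to `0` beyond distance `w + δ`. -/
noncomputable def trap (c w δ v : ℝ) : ℝ := max 0 (min 1 (1 + (w - |v - c|) / δ))

lemma continuous_trap (c w δ : ℝ) : Continuous (trap c w δ) := by
  unfold trap; fun_prop

lemma trap_nonneg (c w δ v : ℝ) : 0 ≤ trap c w δ v := le_max_left _ _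

lemma trap_le_one (c w δ v : ℝ) : trap c w δ v ≤ 1 := max_le zero_le_one (min_le_left _ _)

lemma trap_eq_one {c w δ v : ℝ} (hδ : 0 < δ) (h : |v - c| ≤ w) : trap c w δ v = 1 := by
  have : 0 ≤ (w - |v - c|) / δ := div_nonneg (by linarith) hδ.le
  rw [trap, min_eq_left (by linarith), max_eq_right zero_le_one]

lemma trap_eq_zero {c w δ v : ℝ} (hδ : 0 < δ) (h : w + δ ≤ |v - c|) : trap c w δ v = 0 := by
  have : (w - |v - c|) / δ ≤ -1 := by rw [div_le_iff₀ hδ]; linarith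
  exact max_eq_left ((min_le_right _ _).trans (by linarith))

lemma Um_Ico (hnn : ∀ᵐ y ∂μ, 0 ≤ y) (harith : ¬ IsArith μ) (x h : ℝ) :
    Um μ (Ico x (x + h)) ≠ ⊤ :=
  ((measure_mono fun _ hy => hy.2.le).trans_lt (Um_lt_top hnn harith (x + h))).ne

/-- Blackwell's theorem for the renewal measure in the relatively stable case. -/
theorem blackwell (hnn : ∀ᵐ y ∂μ, 0 ≤ y) (harith : ¬ IsArith μ) (hsv : SlowlyVarying (ell μ))
    {h : ℝ} (hh : 0 < h) :
    Tendsto (fun x => ell μ x * (Um μ).real (Ico x (x + h))) atTop (𝓝 h) := by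
  have hind : ∀ x, ∫ y, (Ico x (x + h)).indicator (fun _ => (1:ℝ)) y ∂(Um μ) =
      (Um μ).real (Ico x (x + h)) := fun x => by
    rw [integral_indicator measurableSet_Ico, setIntegral_const, smul_eq_mul, mul_one]
  have hindi : ∀ x, Integrable ((Ico x (x + h)).indicator (fun _ => (1:ℝ))) (Um μ) := fun x =>
    (integrable_indicator_iff measurableSet_Ico).2
      (integrableOn_const (Um_Ico hnn harith x h))
  have hvol : ∀ c r : ℝ, 0 ≤ r → Integrable ((Icc (c - r) (c + r)).indicator (fun _ => (1:ℝ))) ∧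
      ∫ y, (Icc (c - r) (c + r)).indicator (fun _ => (1:ℝ)) y = 2 * r := by
    intro c r hr
    constructor
    · exact (integrable_indicator_iff measurableSet_Icc).2 (integrableOn_const (by simp))
    · rw [integral_indicator measurableSet_Icc, setIntegral_const, smul_eq_mul, mul_one,
        Real.volume_real_Icc_of_le (by linarith)]
      ring
  have htest : ∀ w δ : ℝ, 0 < δ → w + δ ≤ h → _ := fun w δ hδ hw =>
    tendsto_compact hnn harith hsv hh (continuous_trap (h / 2) w δ)
      (fun v => by rw [abs_of_nonneg (trap_nonneg _ _ _ _)]; exact trap_le_one _ _ _ _)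
      (fun v hv => trap_eq_zero hδ (by
        have := abs_sub_abs_le_abs_sub v (h / 2)
        rw [abs_of_pos (half_pos hh)] at this
        linarith))
  refine tendsto_order.2 ⟨fun a ha => ?_, fun a ha => ?_⟩
  · obtain ⟨δ, hδ, hδ2⟩ := exists_between (lt_min (half_pos hh) (half_pos (sub_pos.2 ha)))
    have h1 := (lt_min_iff.1 hδ2).1
    have h2 := (lt_min_iff.1 hδ2).2
    obtain ⟨i1, i2, i3⟩ := htest (h / 2 - δ) δ hδ (by linarith)
    have hlow : a < ∫ v, trap (h / 2) (h / 2 - δ) δ v := by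
      obtain ⟨j1, j2⟩ := hvol (h / 2) (h / 2 - δ) (by linarith)
      have := integral_mono j1 i2 fun v => by
        refine indicator_apply_le' (fun hv => ?_) (fun _ => trap_nonneg _ _ _ _)
        exact (trap_eq_one hδ (abs_le.2 ⟨by linarith [hv.1], by linarith [hv.2]⟩)).ge
      linarith
    filter_upwards [i3.eventually (lt_mem_nhds hlow), eventually_ge_atTop 0] with x hx hx0
    refine hx.trans_le (mul_le_mul_of_nonneg_left ?_ (ell_nonneg hnn hx0))
    rw [← hind]
    refine integral_mono (i1 x) (hindi x) fun y => ?_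
    by_cases hy : y ∈ Ico x (x + h)
    · rw [indicator_of_mem hy]; exact trap_le_one _ _ _ _
    · rw [indicator_of_notMem hy]
      refine (trap_eq_zero hδ ?_).le
      rw [sub_add_cancel, le_abs]
      rcases lt_or_ge y x with hyx | hyx
      · right; linarith
      · left; linarith [not_lt.1 fun h' => hy ⟨hyx, h'⟩]
  · obtain ⟨δ, hδ, hδ2⟩ := exists_between (lt_min (half_pos hh) (half_pos (sub_pos.2 ha)))
    have h1 := (lt_min_iff.1 hδ2).1
    have h2 := (lt_min_iff.1 hδ2).2
    obtain ⟨i1, i2, i3⟩ := htest (h / 2) δ hδ (by linarith)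
    have hup : ∫ v, trap (h / 2) (h / 2) δ v < a := by
      obtain ⟨j1, j2⟩ := hvol (h / 2) (h / 2 + δ) (by linarith)
      have := integral_mono i2 j1 fun v => by
        refine le_indicator_apply (fun _ => trap_le_one _ _ _ v) (fun hv => ?_)
        refine (trap_eq_zero hδ (not_lt.1 fun hv' => hv ?_)).le
        obtain ⟨k1, k2⟩ := abs_lt.1 hv'
        exact ⟨by linarith, by linarith⟩
      linarith
    filter_upwards [i3.eventually (gt_mem_nhds hup), eventually_ge_atTop 0] with x hx hx0
    refine (mul_le_mul_of_nonneg_left ?_ (ell_nonneg hnn hx0)).trans_lt hx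
    rw [← hind]
    refine integral_mono (hindi x) (i1 x) fun y => ?_
    refine indicator_apply_le' (fun hy => ?_) (fun _ => trap_nonneg _ _ _ _)
    exact (trap_eq_one hδ (abs_le.2 ⟨by linarith [hy.1], by linarith [hy.2]⟩)).ge

end Renew

/-- If `X ≥ 0` is non-arithmetic, `E X = ∞`, and `ℓ` is slowly varying, then
`ℓ(x) U[x, x+h) → h` as `x → ∞` for every `h > 0`. -/
theorem stmt6 (μ : Measure ℝ) [IsProbabilityMeasure μ]
    (hnn : μ (Set.Iio 0) = 0)
    (hmean : ∫⁻ x, ENNReal.ofReal |x| ∂μ = ⊤)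
    (harith : ¬ IsArith μ)
    (hsv : SlowlyVarying (ell μ)) :
    ∀ h : ℝ, 0 < h →
      Tendsto (fun x => ell μ x * (renewal μ (Set.Ico x (x + h))).toReal)
        atTop (𝓝 h) := by
  intro h hh
  simp only [Renew.renewal_eq measurableSet_Ico]
  exact Renew.blackwell (Renew.ae_nonneg hnn) harith hsv hh
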